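/- Let 𝔥 be a complex Hilbert space which is not of dimension two and let d be a bounded decoherence functional for 𝔥. Then d is tensor bounded if, and only if, there exists a trace class operator 𝔛 on the Hilbert space tensor product 𝔥 ⊗ 𝔥 such that d(p,q) = tr((p ⊗ q)𝔛) for all finite-rank projections p and q on 𝔥. -/

import Mathlib

/- Common background definitions: decoherence functionals on the projection
lattice of a complex Hilbert space, boundedness/additivity notions, trace class
operators, and an axiomatisation of the Hilbert space tensor product
`𝔥 ⊗ 𝔥` together with the operator tensor product. -/

noncomputable section

open scoped ComplexInnerProductSpace ComplexOrder
open ContinuousLinearMap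

universe u

variable {E : Type u} [NormedAddCommGroup E] [InnerProductSpace ℂ E] [CompleteSpace E]
variable {G : Type u} [NormedAddCommGroup G] [InnerProductSpace ℂ G] [CompleteSpace G]

/-- `p` is an orthogonal projection on a Hilbert space. -/
def IsOrthoProj (p : E →L[ℂ] E) : Prop :=
  IsIdempotentElem p ∧ IsSelfAdjoint p

/-- `p` is an operator of finite rank. -/
def HasFiniteRank (p : E →L[ℂ] E) : Prop :=
  FiniteDimensional ℂ ↥(LinearMap.range (p : E →ₗ[ℂ] E))

/-- A decoherence functional on the lattice of projections `P(𝔥)`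
(modelled as a function on all pairs of bounded operators whose defining
properties refer only to its values at pairs of orthogonal projections). -/
structure IsDecoherenceFunctional (d : (E →L[ℂ] E) → (E →L[ℂ] E) → ℂ) : Prop where
  hermitian : ∀ p q, IsOrthoProj p → IsOrthoProj q → d p q = starRingEnd ℂ (d q p)
  pos : ∀ p, IsOrthoProj p → 0 ≤ d p p
  normalized : d 1 1 = 1
  orthoadd : ∀ p₁ p₂ q, IsOrthoProj p₁ → IsOrthoProj p₂ → IsOrthoProj q →
    p₁ * p₂ = 0 → d (p₁ + p₂) q = d p₁ q + d p₂ q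

/-- A decoherence functional is bounded if `{|d(p,q)|}` is a bounded set. -/
def DFBounded (d : (E →L[ℂ] E) → (E →L[ℂ] E) → ℂ) : Prop :=
  ∃ C : ℝ, ∀ p q, IsOrthoProj p → IsOrthoProj q → ‖d p q‖ ≤ C

/-- Countable additivity of a decoherence functional: for every countable
pairwise orthogonal family of projections summing (strongly) to `P`,
`d (P, q) = ∑ d (pᵢ, q)`. -/
def DFCountablyAdditive (d : (E →L[ℂ] E) → (E →L[ℂ] E) → ℂ) : Prop :=
  ∀ (p : ℕ → E →L[ℂ] E) (P q : E →L[ℂ] E),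
    (∀ i, IsOrthoProj (p i)) → IsOrthoProj P → IsOrthoProj q →
    (∀ i j, i ≠ j → p i * p j = 0) →
    (∀ x : E, HasSum (fun i => p i x) (P x)) →
    HasSum (fun i => d (p i) q) (d P q)

/-- Complete additivity of a decoherence functional. -/
def DFCompletelyAdditive (d : (E →L[ℂ] E) → (E →L[ℂ] E) → ℂ) : Prop :=
  ∀ (ι : Type u) (p : ι → E →L[ℂ] E) (P q : E →L[ℂ] E),
    (∀ i, IsOrthoProj (p i)) → IsOrthoProj P → IsOrthoProj q →
    (∀ i j, i ≠ j → p i * p j = 0) →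
    (∀ x : E, HasSum (fun i => p i x) (P x)) →
    HasSum (fun i => d (p i) q) (d P q)

/-- A bilinear form `D` on `B(𝔥) × B(𝔥)` is bounded. -/
def IsBoundedBilinear (D : (E →L[ℂ] E) →ₗ[ℂ] (E →L[ℂ] E) →ₗ[ℂ] ℂ) : Prop :=
  ∃ C : ℝ, ∀ x y : E →L[ℂ] E, ‖D x y‖ ≤ C * ‖x‖ * ‖y‖

/-- The bilinear form `D` extends the decoherence functional `d`. -/
def ExtendsDF (D : (E →L[ℂ] E) →ₗ[ℂ] (E →L[ℂ] E) →ₗ[ℂ] ℂ)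
    (d : (E →L[ℂ] E) → (E →L[ℂ] E) → ℂ) : Prop :=
  ∀ p q, IsOrthoProj p → IsOrthoProj q → D p q = d p q

/-- `T` is a trace class operator (via the standard characterisation: the sums
`∑ |⟪eᵢ, T fᵢ⟫|` over finite orthonormal families are uniformly bounded). -/
def IsTraceClass (T : E →L[ℂ] E) : Prop :=
  ∃ C : ℝ, ∀ (n : ℕ) (e f : Fin n → E), Orthonormal ℂ e → Orthonormal ℂ f →
    ∑ i, ‖⟪e i, T (f i)⟫‖ ≤ C

/-- The trace of an operator computed in the Hilbert basis `b` (for a trace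
class operator this is basis independent and is the usual trace). -/
def traceAlong {ι : Type*} (b : HilbertBasis ι ℂ E) (T : E →L[ℂ] E) : ℂ :=
  ∑' i, ⟪b i, T (b i)⟫

/-- The rank one orthogonal projection `p_ξ` onto the span of a unit vector `ξ`. -/
def rankOneProj (ξ : E) : E →L[ℂ] E :=
  (innerSL ℂ ξ).smulRight ξ

/-- An axiomatisation of the Hilbert space tensor product `G = E ⊗ E`:
a bilinear map `tmul` into `G` multiplying inner products and having dense span. -/
structure HilbertTensorProduct (E G : Type u) [NormedAddCommGroup E]
    [InnerProductSpace ℂ E] [NormedAddCommGroup G] [InnerProductSpace ℂ G] :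
    Type u where
  tmul : E →ₗ[ℂ] E →ₗ[ℂ] G
  inner_tmul : ∀ a b c d : E, ⟪tmul a b, tmul c d⟫ = ⟪a, c⟫ * ⟪b, d⟫
  dense_span : Dense (↑(Submodule.span ℂ (Set.range fun z : E × E => tmul z.1 z.2)) : Set G)

/-- The algebraic tensor product `E ⊗_alg E`, viewed as a (dense) subspace of `G`. -/
def HilbertTensorProduct.algSpan (J : HilbertTensorProduct E G) : Submodule ℂ G :=
  Submodule.span ℂ (Set.range fun z : E × E => J.tmul z.1 z.2)

/-- The Hilbert space tensor product together with the operator tensor product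
`(x, y) ↦ x ⊗ y` on bounded operators. -/
structure OperatorTensor (E G : Type u) [NormedAddCommGroup E]
    [InnerProductSpace ℂ E] [NormedAddCommGroup G] [InnerProductSpace ℂ G]
    extends HilbertTensorProduct E G where
  op : (E →L[ℂ] E) → (E →L[ℂ] E) → (G →L[ℂ] G)
  op_tmul : ∀ (x y : E →L[ℂ] E) (a b : E), op x y (tmul a b) = tmul (x a) (y b)

/-- The algebraic tensor product `K(𝔥) • K(𝔥)`: the span in `B(G)` of the
operators `x ⊗ y` with `x, y` compact. -/
def OperatorTensor.compactSpan (J : OperatorTensor E G) : Submodule ℂ (G →L[ℂ] G) :=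
  Submodule.span ℂ {T | ∃ x y : E →L[ℂ] E,
    IsCompactOperator (⇑x) ∧ IsCompactOperator (⇑y) ∧ T = J.op x y}

/-- `β` is the linear functional on `K(𝔥) • K(𝔥)` induced by the bilinear form
`D`, i.e. `β (x ⊗ y) = D (x, y)` for compact `x, y`. -/
def IsBetaFor (J : OperatorTensor E G)
    (D : (E →L[ℂ] E) →ₗ[ℂ] (E →L[ℂ] E) →ₗ[ℂ] ℂ)
    (β : ↥J.compactSpan →ₗ[ℂ] ℂ) : Prop :=
  ∀ x y : E →L[ℂ] E, IsCompactOperator (⇑x) → IsCompactOperator (⇑y) →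
    ∀ hm : J.op x y ∈ J.compactSpan, β ⟨J.op x y, hm⟩ = D x y

/-- `β` is bounded for the operator norm (inherited from `B(G)`). -/
def BetaNormBounded (J : OperatorTensor E G) (β : ↥J.compactSpan →ₗ[ℂ] ℂ) : Prop :=
  ∃ C : ℝ, ∀ S : J.compactSpan, ‖β S‖ ≤ C * ‖(S : G →L[ℂ] G)‖

/-- A decoherence functional is tensor bounded if its associated functional `β`
on `K(𝔥) • K(𝔥)` is bounded for the (pre-)C*-norm. -/
def IsTensorBounded (J : OperatorTensor E G)
    (d : (E →L[ℂ] E) → (E →L[ℂ] E) → ℂ) : Prop :=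
  ∃ D, IsBoundedBilinear D ∧ ExtendsDF D d ∧
    ∃ β, IsBetaFor J D β ∧ BetaNormBounded J β

/-- `β` is uniformly bounded on the projections `p_ξ`, `ξ` a unit vector of the
algebraic tensor product `𝔥 ⊗_alg 𝔥`. -/
def BetaTraciallyBounded (J : OperatorTensor E G) (β : ↥J.compactSpan →ₗ[ℂ] ℂ) : Prop :=
  ∃ C : ℝ, ∀ ξ : G, ξ ∈ J.toHilbertTensorProduct.algSpan → ‖ξ‖ = 1 →
    ∀ hm : rankOneProj ξ ∈ J.compactSpan, ‖β ⟨rankOneProj ξ, hm⟩‖ ≤ C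

/-- A decoherence functional is tracially bounded if it is bounded and its
associated functional `β` is uniformly bounded on rank one projections `p_ξ`
with `ξ` a unit vector in `𝔥 ⊗_alg 𝔥`. -/
def IsTraciallyBounded (J : OperatorTensor E G)
    (d : (E →L[ℂ] E) → (E →L[ℂ] E) → ℂ) : Prop :=
  DFBounded d ∧ ∃ D, IsBoundedBilinear D ∧ ExtendsDF D d ∧
    ∃ β, IsBetaFor J D β ∧ BetaTraciallyBounded J β

set_option linter.unusedSectionVars false
set_option linter.unusedVariables false
set_option linter.unusedSimpArgs false

section alg
variable {A : Type*} [Ring A] [StarRing A] [Algebra ℂ A] [StarModule ℂ A]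

/-- finitely additive and bounded -/
structure FAB (m : A → ℂ) (C : ℝ) : Prop where
  add : ∀ p q, IsStarProjection p → IsStarProjection q → p * q = 0 → m (p + q) = m p + m q
  bdd : ∀ p, IsStarProjection p → ‖m p‖ ≤ C

theorem isp_sum {ι : Type*} (s : Finset ι) (p : ι → A) (hp : ∀ i ∈ s, IsStarProjection (p i))
    (ho : ∀ i ∈ s, ∀ j ∈ s, i ≠ j → p i * p j = 0) : IsStarProjection (∑ i ∈ s, p i) := by
  refine ⟨?_, ?_⟩
  · unfold IsIdempotentElem
    rw [Finset.sum_mul_sum]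
    refine Finset.sum_congr rfl fun i hi => ?_
    rw [Finset.sum_eq_single i]
    · exact (hp i hi).isIdempotentElem
    · intro j hj hne; exact ho i hi j hj hne.symm
    · intro h; exact absurd hi h
  · unfold IsSelfAdjoint
    rw [star_sum]
    exact Finset.sum_congr rfl fun i hi => (hp i hi).isSelfAdjoint

theorem FAB.zero {m : A → ℂ} {C : ℝ} (h : FAB m C) : m 0 = 0 := by
  have := h.add 0 0 (.zero A) (.zero A) (by simp)
  simpa using this

theorem FAB.nonneg {m : A → ℂ} {C : ℝ} (h : FAB m C) : 0 ≤ C :=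
  (norm_nonneg _).trans (h.bdd 0 (.zero A))

theorem FAB.sum {m : A → ℂ} {C : ℝ} (h : FAB m C) {ι : Type*} (s : Finset ι) (p : ι → A)
    (hp : ∀ i ∈ s, IsStarProjection (p i))
    (ho : ∀ i ∈ s, ∀ j ∈ s, i ≠ j → p i * p j = 0) : m (∑ i ∈ s, p i) = ∑ i ∈ s, m (p i) := by
  classical
  induction s using Finset.induction_on with
  | empty => simpa using h.zero
  | insert a s ha ih =>
    rw [Finset.sum_insert ha, Finset.sum_insert ha, h.add, ih]
    · exact fun i hi => hp i (Finset.mem_insert_of_mem hi)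
    · exact fun i hi j hj => ho i (Finset.mem_insert_of_mem hi) j (Finset.mem_insert_of_mem hj)
    · exact hp a (Finset.mem_insert_self _ _)
    · exact isp_sum s p (fun i hi => hp i (Finset.mem_insert_of_mem hi))
        (fun i hi j hj => ho i (Finset.mem_insert_of_mem hi) j (Finset.mem_insert_of_mem hj))
    · rw [Finset.mul_sum]
      refine Finset.sum_eq_zero fun j hj => ho a (Finset.mem_insert_self _ _) j
        (Finset.mem_insert_of_mem hj) ?_
      rintro rfl; exact ha hj

theorem isp_sub {p q : A} (hp : IsStarProjection p) (hq : IsStarProjection q) (h : p * q = q) :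
    IsStarProjection (p - q) ∧ q * (p - q) = 0 := by
  have h2 : q * p = q := by
    have := congrArg star h
    rwa [star_mul, hp.isSelfAdjoint.star_eq, hq.isSelfAdjoint.star_eq] at this
  have hp' : p * p = p := hp.isIdempotentElem
  have hq' : q * q = q := hq.isIdempotentElem
  refine ⟨⟨?_, hp.isSelfAdjoint.sub hq.isSelfAdjoint⟩, ?_⟩
  · unfold IsIdempotentElem
    simp only [mul_sub, sub_mul, h, h2, hp', hq']; abel
  · simp only [mul_sub, h2, hq']; abel

/-- partial isometry gives projection -/
theorem isp_of_pi {T p : A} (hp : IsStarProjection p) (hT : star T * T = p) (hTp : T * p = T) :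
    IsStarProjection (T * star T) := by
  refine ⟨?_, IsSelfAdjoint.mul_star_self T⟩
  unfold IsIdempotentElem
  calc T * star T * (T * star T) = T * (star T * T) * star T := by simp only [mul_assoc]
    _ = _ := by rw [hT, hTp]

theorem sumiso {ι : Type*} [Fintype ι] [DecidableEq ι] (s : ι → A)
    (hs : ∀ a b, star (s a) * s b = if a = b then 1 else 0) (x y : ι → A) :
    star (∑ a, s a * x a) * (∑ b, s b * y b) = ∑ a, star (x a) * y a := by
  rw [star_sum, Finset.sum_mul_sum]
  refine Finset.sum_congr rfl fun a _ => ?_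
  rw [Finset.sum_eq_single a]
  · rw [star_mul, mul_assoc, ← mul_assoc (star (s a)), hs, if_pos rfl, one_mul]
  · intro b _ hb
    rw [star_mul, mul_assoc, ← mul_assoc (star (s a)), hs, if_neg hb.symm, zero_mul, mul_zero]
  · simp

theorem lemmaA {ι : Type*} [Fintype ι] [DecidableEq ι] (N : ℕ) (hN : 2 ≤ N)
    (p : ι → A) (K : A) (hp : ∀ i, IsStarProjection (p i)) (hK : IsStarProjection K)
    (hpK : ∀ i, p i * K = p i) (hsum : ∑ i, p i = (N : ℂ) • K)
    (s : ι × Fin N → A) (hs : ∀ a b, star (s a) * s b = if a = b then 1 else 0)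
    (hKs : ∀ a, K * s a = 0) :
    ∃ (R : ι → A) (S : Fin N → A), (∀ i, IsStarProjection (R i)) ∧ (∀ j, IsStarProjection (S j)) ∧
      (∀ i, R i * ∑ a, s a * star (s a) = R i) ∧ (∀ j, S j * ∑ a, s a * star (s a) = S j) ∧
      ∀ (m : A → ℂ) (C : ℝ), FAB m C →
        ∑ i, m (p i) + ∑ i, m (R i) = N * m K + ∑ j, m (S j) := by
  have hN0 : (N : ℝ) ≠ 0 := by positivity
  have hN1 : (N : ℝ) - 1 ≠ 0 := by
    have : (2:ℝ) ≤ N := by exact_mod_cast hN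
    linarith
  have hN1' : (0:ℝ) < (N : ℝ) - 1 := by
    have : (2:ℝ) ≤ N := by exact_mod_cast hN
    linarith
  have hNC : (N : ℂ) ≠ 0 := by exact_mod_cast hN0
  have hNC1 : (N : ℂ) - 1 ≠ 0 := by exact_mod_cast hN1
  obtain ⟨u, hu, hu'⟩ : ∃ u : ℂ, u * u = 1 / N ∧ star u = u := by
    refine ⟨(Real.sqrt (1 / N) : ℝ), ?_, by simp⟩
    rw [← Complex.ofReal_mul, Real.mul_self_sqrt (by positivity)]; push_cast; rfl
  obtain ⟨w, hw, hw'⟩ : ∃ u : ℂ, u * u = N / (N - 1) ∧ star u = u := by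
    refine ⟨(Real.sqrt (N / (N - 1)) : ℝ), ?_, by simp⟩
    rw [← Complex.ofReal_mul, Real.mul_self_sqrt (by positivity)]; push_cast; rfl
  let α : ι → ι → A := fun i i' => (if i = i' then 1 else 0) - (1 / N : ℂ) • p i'
  let β : Fin N → Fin N → ℂ := fun j j' => (if j = j' then 1 else 0) - 1 / N
  have hβs : ∀ j, ∑ j', β j j' = 0 := by
    intro j; simp [β, Finset.sum_sub_distrib, hNC]
  have hβs' : ∀ j, ∑ j', β j' j = 0 := by
    intro j; simp [β, Finset.sum_sub_distrib, hNC]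
  have hββ : ∀ j j', ∑ j1, β j j1 * β j' j1 = β j j' := by
    intro j j'
    have : ∀ j1, β j j1 * β j' j1 = (if j' = j1 then β j j1 else 0) - (1 / N) * β j j1 := by
      intro j1; simp only [β]; split_ifs <;> ring
    simp only [this, Finset.sum_sub_distrib, ← Finset.mul_sum, hβs]
    simp
  have hβr : ∀ j j', star (β j j') = β j j' := by
    intro j j'; simp only [β]; split_ifs <;> simp
  have hpp : ∀ i, p i * p i = p i := fun i => (hp i).isIdempotentElem
  have hps : ∀ i, star (p i) = p i := fun i => (hp i).isSelfAdjoint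
  have hKK : star K = K := hK.isSelfAdjoint
  have hKp : ∀ i, K * p i = p i := fun i => by
    have := congrArg star (hpK i); rwa [star_mul, hKK, hps] at this
  have hαs : ∀ i i', star (α i i') = α i i' := by
    intro i i'; simp only [α]; split_ifs <;> simp [hps]
  have hαp : ∀ i1, ∑ i, α i i1 * p i = 0 := by
    intro i1
    have : ∀ i, α i i1 * p i = (if i = i1 then p i else 0) - (1 / N : ℂ) • (p i1 * p i) := by
      intro i; simp only [α]; split_ifs <;> simp [sub_mul]
    simp only [this, Finset.sum_sub_distrib, ← Finset.smul_sum, ← Finset.mul_sum, hsum]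
    simp [hpK, smul_smul, hNC]
  have hαα : ∀ i i', ∑ i1, (α i i1 * p i |> star) * (α i' i1 * p i') =
      (if i = i' then p i else 0) - (1 / N : ℂ) • (p i * p i') := by
    intro i i'
    have : ∀ i1, (α i i1 * p i |> star) * (α i' i1 * p i') =
       (if i = i1 then p i * (α i' i1 * p i') else 0)
        - (1 / N : ℂ) • (p i * ((if i' = i1 then p i1 * p i' else 0) -
            (1 / N : ℂ) • (p i1 * p i'))) := by
      intro i1
      simp only [star_mul, hαs, hps]
      have h1 : p i1 * (p i1 * p i') = p i1 * p i' := by rw [← mul_assoc, hpp]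
      simp only [α]
      split_ifs <;> simp [sub_mul, mul_sub, h1, mul_assoc] <;> module
    simp only [this, Finset.sum_sub_distrib, ← Finset.smul_sum, ← Finset.mul_sum, ← Finset.sum_mul,
      hsum]
    simp [hKp, smul_smul, hNC, hpp]
    simp only [α]
    by_cases h : i = i'
    · subst h; simp [mul_sub, sub_mul, hpp]
    · simp [h, Ne.symm h, mul_sub, sub_mul, ← mul_assoc, hpp]
  let x : ι → Fin N → ι × Fin N → A := fun i j a => β j a.2 • (α i a.1 * p i)
  let T : ι → Fin N → A := fun i j => u • p i + w • ∑ a, s a * x i j a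
  have hps0 : ∀ i a, p i * s a = 0 := fun i a => by rw [← hpK i, mul_assoc, hKs, mul_zero]
  have hsp0 : ∀ i a, star (s a) * p i = 0 := fun i a => by
    have := congrArg star (hps0 i a); rwa [star_mul, hps, star_zero] at this
  have hsK0 : ∀ a, star (s a) * K = 0 := fun a => by
    have := congrArg star (hKs a); rwa [star_mul, hKK, star_zero] at this
  have hTT : ∀ i j i' j', star (T i j) * T i' j' =
      (1 / N : ℂ) • (p i * p i') + (N / (N - 1) * β j j' : ℂ) •
        ((if i = i' then p i else 0) - (1 / N : ℂ) • (p i * p i')) := by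
    intro i j i' j'
    have e1 : p i * ∑ a, s a * x i' j' a = 0 := by
      rw [Finset.mul_sum]; exact Finset.sum_eq_zero fun a _ => by rw [← mul_assoc, hps0, zero_mul]
    have e2 : (star (∑ a, s a * x i j a)) * p i' = 0 := by
      rw [star_sum, Finset.sum_mul]
      exact Finset.sum_eq_zero fun a _ => by rw [star_mul, mul_assoc, hsp0, mul_zero]
    have e3 : (star (∑ a, s a * x i j a)) * (∑ a, s a * x i' j' a) =
        β j j' • ((if i = i' then p i else 0) - (1 / N : ℂ) • (p i * p i')) := by
      rw [sumiso s hs, ← hαα, ← hββ, Fintype.sum_prod_type, Finset.smul_sum]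
      refine Finset.sum_congr rfl fun i1 _ => ?_
      rw [Finset.sum_smul]
      refine Finset.sum_congr rfl fun j1 _ => ?_
      simp only [x, star_smul, hβr, smul_mul_assoc, mul_smul_comm, smul_smul]
      rw [mul_comm]
    simp only [T, star_add, star_smul, hu', hw', hps, add_mul, mul_add, smul_mul_assoc,
      mul_smul_comm, e1, e2, e3, smul_smul, hu, hw, smul_zero, add_zero, zero_add, ← mul_assoc]
  have hTTs : ∀ i j, star (T i j) * T i j = p i := by
    intro i j
    rw [hTT]
    simp only [if_pos, hpp, β]
    have : p i - (1 / N : ℂ) • p i = (1 - 1 / N : ℂ) • p i := by rw [sub_smul, one_smul]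
    rw [this, smul_smul, ← add_smul]
    convert one_smul ℂ (p i) using 2
    field_simp; ring
  have hTTi : ∀ i i' j, i ≠ i' → star (T i j) * T i' j = 0 := by
    intro i i' j h
    rw [hTT]
    simp only [if_neg h, if_pos, β, zero_sub, smul_neg, smul_smul]
    rw [← neg_smul, ← add_smul]
    convert zero_smul ℂ (p i * p i') using 2
    field_simp; ring
  have hTTj : ∀ i j j', j ≠ j' → star (T i j) * T i j' = 0 := by
    intro i j j' h
    rw [hTT]
    simp only [if_pos, hpp, β, if_neg h]
    have : p i - (1 / N : ℂ) • p i = (1 - 1 / N : ℂ) • p i := by rw [sub_smul, one_smul]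
    rw [this, smul_smul, ← add_smul]
    convert zero_smul ℂ (p i) using 2
    field_simp; ring
  have hTp : ∀ i j, T i j * p i = T i j := by
    intro i j
    simp only [T, add_mul, smul_mul_assoc, hpp, Finset.sum_mul, x, mul_smul_comm, mul_assoc]
  let P : ι → Fin N → A := fun i j => T i j * star (T i j)
  have hP : ∀ i j, IsStarProjection (P i j) := fun i j => isp_of_pi (hp i) (hTTs i j) (hTp i j)
  have hPi : ∀ i i' j, i ≠ i' → P i j * P i' j = 0 := by
    intro i i' j h
    calc T i j * star (T i j) * (T i' j * star (T i' j))
        = T i j * (star (T i j) * T i' j) * star (T i' j) := by simp only [mul_assoc]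
      _ = 0 := by rw [hTTi _ _ _ h]; simp
  have hPj : ∀ i j j', j ≠ j' → P i j * P i j' = 0 := by
    intro i j j' h
    calc T i j * star (T i j) * (T i j' * star (T i j'))
        = T i j * (star (T i j) * T i j') * star (T i j') := by simp only [mul_assoc]
      _ = 0 := by rw [hTTj _ _ _ h]; simp
  have hTK : ∀ i j, star (T i j) * K = u • p i := by
    intro i j
    have e2 : (star (∑ a, s a * x i j a)) * K = 0 := by
      rw [star_sum, Finset.sum_mul]
      exact Finset.sum_eq_zero fun a _ => by rw [star_mul, mul_assoc, hsK0, mul_zero]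
    simp only [T, star_add, star_smul, hu', hw', hps, add_mul, smul_mul_assoc, e2, hpK, smul_zero,
      add_zero]
  have hPK : ∀ i j, P i j * K = u • T i j := by
    intro i j; simp only [P]; rw [mul_assoc, hTK, mul_smul_comm, hTp]
  have hQ : ∀ j, IsStarProjection (∑ i, P i j) := fun j =>
    isp_sum _ _ (fun i _ => hP i j) (fun i _ i' _ h => hPi i i' j h)
  have hQ' : ∀ i, IsStarProjection (∑ j, P i j) := fun i =>
    isp_sum _ _ (fun j _ => hP i j) (fun j _ j' _ h => hPj i j j' h)
  have hQK : ∀ j, (∑ i, P i j) * K = K := by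
    intro j
    rw [Finset.sum_mul]
    simp only [hPK, T, Finset.smul_sum, smul_add, smul_smul, hu, Finset.sum_add_distrib]
    rw [← Finset.smul_sum, hsum, Finset.sum_comm]
    rw [Finset.sum_eq_zero]
    · simp [smul_smul, hNC]
    · intro a _
      simp only [x, ← Finset.smul_sum, ← Finset.mul_sum, hαp]; simp
  have hQp' : ∀ i, (∑ j, P i j) * K = p i := by
    intro i
    rw [Finset.sum_mul]
    simp only [hPK, T, Finset.smul_sum, smul_add, smul_smul, hu, Finset.sum_add_distrib]
    have e0 : ∑ j : Fin N, (1 / N : ℂ) • p i = p i := by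
      simp [← Nat.cast_smul_eq_nsmul ℂ, smul_smul, hNC]
    rw [e0, Finset.sum_comm, Finset.sum_eq_zero, add_zero]
    · intro a _
      simp only [x, ← Finset.smul_sum, ← Finset.mul_sum, ← Finset.sum_smul, hβs']; simp
  have hQp : ∀ i, (∑ j, P i j) * p i = p i := by
    intro i
    calc _ = ((∑ j, P i j) * K) * p i := by rw [mul_assoc, hKp]
      _ = _ := by rw [hQp', hpp]
  have hTe : ∀ i j, star (T i j) * (K + ∑ a, s a * star (s a)) = star (T i j) := by
    intro i j
    rw [mul_add, hTK]
    have e1 : ∀ y : A, p i * ∑ a, s a * star (s a) = 0 := by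
      intro y
      rw [Finset.mul_sum]; exact Finset.sum_eq_zero fun a _ => by rw [← mul_assoc, hps0, zero_mul]
    have e3 : (star (∑ a, s a * x i j a)) * (∑ a, s a * star (s a)) =
        star (∑ a, s a * x i j a) := by
      rw [sumiso s hs]; simp [star_sum]
    simp only [T, star_add, star_smul, hu', hw', hps, add_mul, smul_mul_assoc, e1 0, e3, smul_zero,
      zero_add]
  have hPe : ∀ i j, P i j * ∑ a, s a * star (s a) = P i j - P i j * K := by
    intro i j
    have : P i j * (K + ∑ a, s a * star (s a)) = P i j := by
      simp only [P]; rw [mul_assoc, hTe]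
    rw [mul_add] at this
    exact eq_sub_of_add_eq' this
  have hKe : K * ∑ a, s a * star (s a) = 0 := by
    rw [Finset.mul_sum]; exact Finset.sum_eq_zero fun a _ => by rw [← mul_assoc, hKs, zero_mul]
  refine ⟨fun i => ∑ j, P i j - p i, fun j => ∑ i, P i j - K,
    fun i => (isp_sub (hQ' i) (hp i) (hQp i)).1, fun j => (isp_sub (hQ j) hK (hQK j)).1, ?_, ?_, ?_⟩
  · intro i
    have : p i * ∑ a, s a * star (s a) = 0 := by
      rw [← hpK i, mul_assoc, hKe, mul_zero]
    simp only
    rw [sub_mul, this, Finset.sum_mul]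
    simp only [hPe, Finset.sum_sub_distrib]
    rw [← Finset.sum_mul, hQp', sub_zero]
  · intro j
    simp only
    rw [sub_mul, hKe, Finset.sum_mul]
    simp only [hPe, Finset.sum_sub_distrib]
    rw [← Finset.sum_mul, hQK, sub_zero]
  · intro m C hm
    have h1 : ∀ i, m (p i) + m (∑ j, P i j - p i) = ∑ j, m (P i j) := by
      intro i
      obtain ⟨h1, h2⟩ := isp_sub (hQ' i) (hp i) (hQp i)
      rw [← hm.add _ _ (hp i) h1 h2, add_sub_cancel]
      exact hm.sum _ _ (fun j _ => hP i j) (fun j _ j' _ h => hPj i j j' h)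
    have h2 : ∀ j, m K + m (∑ i, P i j - K) = ∑ i, m (P i j) := by
      intro j
      obtain ⟨h1, h2⟩ := isp_sub (hQ j) hK (hQK j)
      rw [← hm.add _ _ hK h1 h2, add_sub_cancel]
      exact hm.sum _ _ (fun i _ => hP i j) (fun i _ i' _ h => hPi i i' j h)
    rw [← Finset.sum_add_distrib]
    simp only [h1]
    rw [Finset.sum_comm]
    simp only [← h2, Finset.sum_add_distrib]
    simp
end alg

section algB
variable {A : Type*} [Ring A] [StarRing A] [Algebra ℂ A] [StarModule ℂ A]

/-- A Cuntz pair of isometries. -/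
structure CuntzPair (V₁ V₂ : A) : Prop where
  h11 : star V₁ * V₁ = 1
  h22 : star V₂ * V₂ = 1
  h12 : star V₁ * V₂ = 0
  hsum : V₁ * star V₁ + V₂ * star V₂ = 1

theorem CuntzPair.h21 {V₁ V₂ : A} (h : CuntzPair V₁ V₂) : star V₂ * V₁ = 0 := by
  have := congrArg star h.h12; simpa using this

theorem CuntzPair.room {V₁ V₂ : A} (h : CuntzPair V₁ V₂) (n m : ℕ) :
    star (V₂ ^ n * V₁) * (V₂ ^ m * V₁) = if n = m then 1 else 0 := by
  induction n generalizing m with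
  | zero =>
    cases m with
    | zero => simp [h.h11]
    | succ m => simp [pow_succ', ← mul_assoc, h.h12]
  | succ n ih =>
    cases m with
    | zero => simp [pow_succ', mul_assoc, h.h21]
    | succ m =>
      have : star (V₂ ^ (n+1) * V₁) * (V₂ ^ (m+1) * V₁) =
          star (V₂ ^ n * V₁) * (star V₂ * V₂) * (V₂ ^ m * V₁) := by
        simp only [pow_succ', star_mul, mul_assoc]
      rw [this, h.h22, mul_one, ih]; simp

theorem lemmaB0 {V₁ V₂ : A} (h : CuntzPair V₁ V₂) {r : A} (hr : star r * r = 1)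
    {ι : Type*} [Fintype ι] [DecidableEq ι] (N : ℕ) (hN : 2 ≤ N)
    (p : ι → A) (hp : ∀ i, IsStarProjection (p i)) (hpr : ∀ i, p i * r = 0)
    (hsum : ∑ i, p i = (N : ℂ) • (1 - r * star r)) (m : A → ℂ) (C : ℝ) (hm : FAB m C) :
    ∑ i, m (p i) = N * m (1 - r * star r) := by
  set K := 1 - r * star r with hKdef
  have hrr : IsStarProjection (r * star r) := by
    refine ⟨?_, IsSelfAdjoint.mul_star_self r⟩
    unfold IsIdempotentElem
    calc r * star r * (r * star r) = r * (star r * r) * star r := by simp only [mul_assoc]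
      _ = _ := by rw [hr, mul_one]
  have hK : IsStarProjection K := hrr.one_sub
  have hKr : K * r = 0 := by rw [hKdef, sub_mul, mul_assoc, hr]; simp
  have hpK : ∀ i, p i * K = p i := fun i => by
    rw [hKdef, mul_sub, ← mul_assoc, hpr]; simp
  let e : ℕ → ι × Fin N → ℕ := fun l a => Nat.pair l (Fintype.equivFin _ a)
  have he : ∀ l l' a b, e l a = e l' b ↔ l = l' ∧ a = b := by
    intro l l' a b
    simp only [e, Nat.pair_eq_pair, Fin.val_inj, EmbeddingLike.apply_eq_iff_eq]
  let s : ℕ → ι × Fin N → A := fun l a => r * (V₂ ^ (e l a) * V₁)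
  have hs : ∀ l l' a b, star (s l a) * s l' b = if l = l' ∧ a = b then 1 else 0 := by
    intro l l' a b
    calc star (s l a) * s l' b = star (V₂ ^ (e l a) * V₁) * (star r * r) * (V₂ ^ (e l' b) * V₁) := by
          simp only [s, star_mul, mul_assoc]
      _ = _ := by rw [hr, mul_one, h.room]; simp only [he]
  have hA := fun l => lemmaA N hN p K hp hK hpK hsum (s l)
    (fun a b => by rw [hs]; simp) (fun a => by simp only [s]; rw [← mul_assoc, hKr, zero_mul])
  choose R S hR hS hRe hSe hmm using hA
  have hort : ∀ l l' x y, l ≠ l' → IsStarProjection x → IsStarProjection y →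
      x * ∑ a, s l a * star (s l a) = x → y * ∑ a, s l' a * star (s l' a) = y → x * y = 0 := by
    intro l l' x y hl hx hy h1 h2
    have h2' : (∑ a, s l' a * star (s l' a)) * y = y := by
      have := congrArg star h2
      rw [star_mul, hy.isSelfAdjoint.star_eq] at this
      rw [← this]
      congr 1
      · simp [star_sum]
    rw [← h1, ← h2', mul_assoc, ← mul_assoc (∑ a, s l a * star (s l a)), Finset.sum_mul_sum]
    have : ∀ a b, s l a * star (s l a) * (s l' b * star (s l' b)) = 0 := by
      intro a b
      calc s l a * star (s l a) * (s l' b * star (s l' b)) =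
          s l a * (star (s l a) * s l' b) * star (s l' b) := by simp only [mul_assoc]
        _ = 0 := by rw [hs]; simp [hl]
    simp [this]
  have key : ∀ L : ℕ, (L : ℂ) * (∑ i, m (p i) - N * m K) =
      ∑ j, m (∑ l ∈ Finset.range L, S l j) - ∑ i, m (∑ l ∈ Finset.range L, R l i) := by
    intro L
    have h1 : ∀ j, m (∑ l ∈ Finset.range L, S l j) = ∑ l ∈ Finset.range L, m (S l j) := fun j =>
      hm.sum _ _ (fun l _ => hS l j) (fun l _ l' _ hl => hort l l' _ _ hl (hS _ _) (hS _ _)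
        (hSe _ _) (hSe _ _))
    have h2 : ∀ j, m (∑ l ∈ Finset.range L, R l j) = ∑ l ∈ Finset.range L, m (R l j) := fun j =>
      hm.sum _ _ (fun l _ => hR l j) (fun l _ l' _ hl => hort l l' _ _ hl (hR _ _) (hR _ _)
        (hRe _ _) (hRe _ _))
    simp only [h1, h2]
    rw [Finset.sum_comm, Finset.sum_comm (s := Finset.univ) (t := Finset.range L),
      ← Finset.sum_sub_distrib]
    have h3 : ∀ l, ∑ j, m (S l j) - ∑ i, m (R l i) = ∑ i, m (p i) - N * m K := by
      intro l
      have := hmm l m C hm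
      linear_combination -this
    simp [h3, mul_sub]
  have hbd : ∀ L : ℕ, (L : ℝ) * ‖∑ i, m (p i) - N * m K‖ ≤ (N + Fintype.card ι) * C := by
    intro L
    have := congrArg norm (key L)
    rw [norm_mul, Complex.norm_natCast] at this
    rw [this]
    refine (norm_sub_le _ _).trans ?_
    rw [add_mul]
    refine add_le_add ?_ ?_
    · refine (norm_sum_le_of_le _ (fun j _ => hm.bdd _ (isp_sum _ _ (fun l _ => hS l j)
        (fun l _ l' _ hl => hort l l' _ _ hl (hS _ _) (hS _ _) (hSe _ _) (hSe _ _))))).trans ?_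
      simp
    · refine (norm_sum_le_of_le _ (fun j _ => hm.bdd _ (isp_sum _ _ (fun l _ => hR l j)
        (fun l _ l' _ hl => hort l l' _ _ hl (hR _ _) (hR _ _) (hRe _ _) (hRe _ _))))).trans ?_
      simp
  by_contra hne
  have hpos : 0 < ‖∑ i, m (p i) - N * m K‖ := norm_pos_iff.mpr (sub_ne_zero.mpr hne)
  obtain ⟨L, hL⟩ := exists_nat_gt ((N + Fintype.card ι) * C / ‖∑ i, m (p i) - N * m K‖)
  rw [div_lt_iff₀ hpos] at hL
  exact absurd (hbd L) (not_le.mpr hL)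

theorem lemmaB {V₁ V₂ : A} (h : CuntzPair V₁ V₂) {r : A} (hr : star r * r = 1)
    (N : ℕ) (s : Multiset A) (hs : ∀ p ∈ s, IsStarProjection p ∧ p * r = 0)
    (hsum : s.sum = (N : ℂ) • (1 - r * star r)) (m : A → ℂ) (C : ℝ) (hm : FAB m C) :
    (s.map m).sum = N * m (1 - r * star r) := by
  have hrr : IsStarProjection (r * star r) := by
    refine ⟨?_, IsSelfAdjoint.mul_star_self r⟩
    unfold IsIdempotentElem
    calc r * star r * (r * star r) = r * (star r * r) * star r := by simp only [mul_assoc]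
      _ = _ := by rw [hr, mul_one]
  have hK := hrr.one_sub
  have hKr : (1 - r * star r) * r = 0 := by rw [sub_mul, mul_assoc, hr]; simp
  induction s using Quotient.inductionOn with
  | h l =>
  simp only [Multiset.quot_mk_to_coe, Multiset.mem_coe, Multiset.sum_coe, Multiset.map_coe] at *
  have := lemmaB0 h hr (ι := Fin l.length ⊕ Fin 2) (N + 2) (by omega)
    (Sum.elim (fun i => l[i]) (fun _ => 1 - r * star r)) ?_ ?_ ?_ m C hm
  · simp only [Fintype.sum_sum_type, Sum.elim_inl, Sum.elim_inr] at this
    rw [Fin.sum_univ_two] at this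
    have e := Fin.sum_univ_fun_getElem l m
    simp only [Fin.getElem_fin] at this
    rw [e] at this
    push_cast at this
    linear_combination this
  · rintro (i | i)
    · exact (hs _ (List.getElem_mem _)).1
    · exact hK
  · rintro (i | i)
    · exact (hs _ (List.getElem_mem _)).2
    · exact hKr
  · simp only [Fintype.sum_sum_type, Sum.elim_inl, Sum.elim_inr]
    rw [Fin.sum_univ_two]
    have e := Fin.sum_univ_fun_getElem l id
    simp only [id, List.map_id] at e
    simp only [Fin.getElem_fin]
    rw [e, hsum]
    push_cast
    module

theorem lemmaLR {V₁ V₂ : A} (h : CuntzPair V₁ V₂) {r : A} (hr : star r * r = 1)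
    (s t : Multiset A) (hs : ∀ p ∈ s, IsStarProjection p ∧ p * r = 0)
    (ht : ∀ p ∈ t, IsStarProjection p ∧ p * r = 0)
    (hsum : s.sum = t.sum) (m : A → ℂ) (C : ℝ) (hm : FAB m C) :
    (s.map m).sum = (t.map m).sum := by
  have hrr : IsStarProjection (r * star r) := by
    refine ⟨?_, IsSelfAdjoint.mul_star_self r⟩
    unfold IsIdempotentElem
    calc r * star r * (r * star r) = r * (star r * r) * star r := by simp only [mul_assoc]
      _ = _ := by rw [hr, mul_one]
  have hK := hrr.one_sub
  have hKr : (1 - r * star r) * r = 0 := by rw [sub_mul, mul_assoc, hr]; simp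
  have hKq : ∀ q ∈ t, (1 - r * star r) * q = q := by
    intro q hq
    have := congrArg star (ht q hq).2
    rw [star_mul, (ht q hq).1.isSelfAdjoint.star_eq, star_zero] at this
    rw [sub_mul, mul_assoc, this]; simp
  have key := lemmaB h hr t.card (s + t.map (fun q => (1 - r * star r) - q)) ?_ ?_ m C hm
  · rw [Multiset.map_add, Multiset.sum_add, Multiset.map_map] at key
    have e : (t.map (m ∘ fun q => (1 - r * star r) - q)).sum =
        (t.map (fun q => m (1 - r * star r) - m q)).sum := by
      congr 1
      refine Multiset.map_congr rfl fun q hq => ?_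
      obtain ⟨h1, h2⟩ := isp_sub hK (ht q hq).1 (hKq q hq)
      have := hm.add _ _ (ht q hq).1 h1 h2
      rw [add_sub_cancel] at this
      simp only [Function.comp]
      rw [this]; ring
    rw [e, Multiset.sum_map_sub] at key
    simp at key
    linear_combination key
  · intro p hp
    rw [Multiset.mem_add] at hp
    rcases hp with hp | hp
    · exact hs p hp
    · rw [Multiset.mem_map] at hp
      obtain ⟨q, hq, rfl⟩ := hp
      refine ⟨(isp_sub hK (ht q hq).1 (hKq q hq)).1, ?_⟩
      rw [sub_mul, hKr, (ht q hq).2, sub_zero]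
  · rw [Multiset.sum_add, Multiset.sum_map_sub, hsum]
    simp [Nat.cast_smul_eq_nsmul]
end algB

section algC
variable {A : Type*} [CStarAlgebra A]

theorem exists_s (a Z : A) (ha : IsSelfAdjoint a) (ha1 : ‖a‖ ≤ 1) (hZ : IsStarProjection Z)
    (haZ : a * Z = a) :
    ∃ s : A, star s = s ∧ s * s = Z - a * a ∧ s * a = a * s ∧ s * Z = s ∧ Z * s = s := by
  have hZa : Z * a = a := by
    have := congrArg star haZ; rwa [star_mul, ha.star_eq, hZ.isSelfAdjoint.star_eq] at this
  have hZZ : Z * Z = Z := hZ.isIdempotentElem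
  obtain (_ | _) := subsingleton_or_nontrivial A
  · exact ⟨0, Subsingleton.elim _ _, Subsingleton.elim _ _, Subsingleton.elim _ _,
      Subsingleton.elim _ _, Subsingleton.elim _ _⟩
  let s0 : A := cfc (fun x : ℝ => Real.sqrt (1 - x ^ 2)) a
  have h1 : star s0 = s0 := (cfc_predicate (R := ℝ) (p := IsSelfAdjoint) _ a).star_eq
  have h2 : s0 * s0 = 1 - a * a := by
    have : (1 : A) - a * a = cfc (fun x : ℝ => 1 - x ^ 2) a := by
      rw [cfc_sub .., cfc_pow .., cfc_const_one .., cfc_id' .., sq]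
    rw [this, ← cfc_mul ..]
    refine cfc_congr fun x hx => ?_
    have hx1 : ‖x‖ ≤ 1 := (spectrum.norm_le_norm_of_mem hx).trans ha1
    rw [Real.mul_self_sqrt]
    rw [Real.norm_eq_abs, abs_le] at hx1
    nlinarith
  have h3 : s0 * a = a * s0 := (Commute.cfc_real (Commute.refl a) _).eq
  have h4 : s0 * Z = Z * s0 := (Commute.cfc_real (show a * Z = Z * a by rw [haZ, hZa]) _).eq
  refine ⟨s0 * Z, ?_, ?_, ?_, ?_, ?_⟩
  · rw [star_mul, h1, hZ.isSelfAdjoint.star_eq, h4]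
  · rw [mul_assoc, h4, ← mul_assoc Z Z, hZZ, ← h4, ← mul_assoc, h2, sub_mul, mul_assoc, haZ, one_mul]
  · rw [mul_assoc, hZa, ← mul_assoc, ← h3, mul_assoc, haZ]
  · rw [mul_assoc, hZZ]
  · rw [← mul_assoc, ← h4, mul_assoc, hZZ]

theorem isp_mul_star {g Z : A} (hg : star g * g = Z) (hgZ : g * Z = g) :
    IsStarProjection (g * star g) := by
  refine ⟨?_, IsSelfAdjoint.mul_star_self g⟩
  unfold IsIdempotentElem
  calc g * star g * (g * star g) = g * (star g * g) * star g := by simp only [mul_assoc]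
    _ = _ := by rw [hg, hgZ]

theorem plemma (a Z g h : A) (ha : IsSelfAdjoint a) (ha1 : ‖a‖ ≤ 1) (hZ : IsStarProjection Z)
    (haZ : a * Z = a) (hg : star g * g = Z) (hh : star h * h = Z) (hgZ : g * Z = g)
    (hhZ : h * Z = h) (hgh : star g * h = 0) :
    ∃ P Q : A, IsStarProjection P ∧ IsStarProjection Q ∧
      g * a * star g - h * a * star h = P + Q - g * star g - h * star h ∧
      ∀ r, star g * r = 0 → star h * r = 0 → P * r = 0 ∧ Q * r = 0 := by
  obtain ⟨s, hs1, hs2, hs3, hs4, hs5⟩ := exists_s a Z ha ha1 hZ haZ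
  have hhg : star h * g = 0 := by
    have := congrArg star hgh; simpa using this
  have hZa : Z * a = a := by
    have := congrArg star haZ; rwa [star_mul, ha.star_eq, hZ.isSelfAdjoint.star_eq] at this
  have hZZ : Z * Z = Z := hZ.isIdempotentElem
  have hZs : star Z = Z := hZ.isSelfAdjoint.star_eq
  have key : ∀ t : A, star t = t → t * t = Z - a * a → t * a = a * t → t * Z = t → Z * t = t →
      IsStarProjection ((1 / 2 : ℂ) • (g * (Z + a) * star g + g * t * star h + h * t * star g +
        h * (Z - a) * star h)) := by
    intro s hs1 hs2 hs3 hs4 hs5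
    refine ⟨?_, ?_⟩
    · unfold IsIdempotentElem
      have gg : ∀ y, star g * (g * y) = Z * y := fun y => by rw [← mul_assoc, hg]
      have hh' : ∀ y, star h * (h * y) = Z * y := fun y => by rw [← mul_assoc, hh]
      have gh : ∀ y, star g * (h * y) = 0 := fun y => by rw [← mul_assoc, hgh, zero_mul]
      have hg' : ∀ y, star h * (g * y) = 0 := fun y => by rw [← mul_assoc, hhg, zero_mul]
      have aZ : ∀ y, a * (Z * y) = a * y := fun y => by rw [← mul_assoc, haZ]
      have Za : ∀ y, Z * (a * y) = a * y := fun y => by rw [← mul_assoc, hZa]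
      have ZZ : ∀ y, Z * (Z * y) = Z * y := fun y => by rw [← mul_assoc, hZZ]
      have sZ : ∀ y, s * (Z * y) = s * y := fun y => by rw [← mul_assoc, hs4]
      have Zs : ∀ y, Z * (s * y) = s * y := fun y => by rw [← mul_assoc, hs5]
      have ss : ∀ y, s * (s * y) = Z * y - a * (a * y) := fun y => by
        rw [← mul_assoc, hs2, sub_mul, mul_assoc]
      have sa : ∀ y, s * (a * y) = a * (s * y) := fun y => by
        rw [← mul_assoc, hs3, mul_assoc]
      simp only [smul_mul_assoc, mul_smul_comm, smul_smul]
      simp only [mul_add, add_mul, mul_sub, sub_mul, mul_assoc, gg, hh', gh, hg', aZ, Za, ZZ, sZ, Zs,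
        ss, sa, mul_zero, add_zero, zero_add, sub_zero]
      module
    · unfold IsSelfAdjoint
      simp only [star_smul, star_add, star_sub, star_mul, star_star, hs1, ha.star_eq, hZs]
      have : star (1 / 2 : ℂ) = 1 / 2 := by simp
      rw [this]
      congr 1
      simp only [mul_assoc]; abel
  have hk : ∀ t r, star g * r = 0 → star h * r = 0 →
      ((1 / 2 : ℂ) • (g * (Z + a) * star g + g * t * star h + h * t * star g +
        h * (Z - a) * star h)) * r = 0 := by
    intro t r h1 h2
    simp only [smul_mul_assoc, add_mul, mul_assoc, h1, h2, mul_zero, add_zero, smul_zero]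
  refine ⟨_, _, key s hs1 hs2 hs3 hs4 hs5, key (-s) (by simp [hs1]) (by simp [hs2]) (by simp [hs3])
    (by simp [hs4]) (by simp [hs5]), ?_, fun r h1 h2 => ⟨hk _ r h1 h2, hk _ r h1 h2⟩⟩
  simp only [mul_add, add_mul, mul_sub, sub_mul, hgZ, hhZ, mul_neg, neg_mul]
  module
end algC

section opD

theorem split_proj (p R R' : E →L[ℂ] E) (hp : IsStarProjection p) (hR : IsStarProjection R)
    (hR' : IsStarProjection R') (h : R' * p * R = 0) :
    ∃ a : E →L[ℂ] E, IsStarProjection a ∧ p * a = a ∧ a * R = 0 ∧ (p - a) * R' = 0 := by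
  have hpp : p * p = p := hp.isIdempotentElem
  let U : Submodule ℂ E := LinearMap.ker ((1 - p : E →L[ℂ] E) : E →ₗ[ℂ] E) ⊓
    LinearMap.ker (R : E →ₗ[ℂ] E)
  have hU : IsClosed (U : Set E) := by
    simp only [U, Submodule.coe_inf]
    exact (ContinuousLinearMap.isClosed_ker (1 - p)).inter (ContinuousLinearMap.isClosed_ker R)
  have : CompleteSpace U := hU.completeSpace_coe
  have hmem : ∀ x, x ∈ U ↔ p x = x ∧ R x = 0 := by
    intro x
    simp only [U, Submodule.mem_inf, LinearMap.mem_ker]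
    refine and_congr ?_ Iff.rfl
    change x - p x = 0 ↔ _
    rw [sub_eq_zero, eq_comm]
  have hisp : IsStarProjection U.starProjection := isStarProjection_starProjection
  have hpa : p * U.starProjection = U.starProjection := by
    ext x
    exact ((hmem _).1 (U.starProjection_apply_mem x)).1
  have hRa : R * U.starProjection = 0 := by
    ext x
    exact ((hmem _).1 (U.starProjection_apply_mem x)).2
  have haR : U.starProjection * R = 0 := by
    have := congrArg star hRa
    rwa [star_mul, hisp.isSelfAdjoint.star_eq, hR.isSelfAdjoint.star_eq, star_zero] at this
  have hap : U.starProjection * p = U.starProjection := by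
    have := congrArg star hpa
    rwa [star_mul, hisp.isSelfAdjoint.star_eq, hp.isSelfAdjoint.star_eq] at this
  have hRpR : R * p * R' = 0 := by
    have := congrArg star h
    rwa [star_mul, star_mul, hR.isSelfAdjoint.star_eq, hR'.isSelfAdjoint.star_eq,
      hp.isSelfAdjoint.star_eq, star_zero, ← mul_assoc] at this
  refine ⟨U.starProjection, hisp, hpa, haR, ?_⟩
  have : U.starProjection * (p * R') = p * R' := by
    ext x
    refine Submodule.starProjection_eq_self_iff.2 ((hmem _).2 ⟨?_, ?_⟩)
    · change (p * (p * R')) x = _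
      rw [← mul_assoc, hpp]; rfl
    · change (R * (p * R')) x = _
      rw [← mul_assoc, hRpR]; rfl
  rw [← mul_assoc, hap] at this
  rw [sub_mul, this, sub_self]

theorem iso_isp {A : Type*} [CStarAlgebra A] {g : A} (hg : star g * g = 1) :
    IsStarProjection (g * star g) := isp_mul_star hg (mul_one g)

theorem isp_conj {A : Type*} [CStarAlgebra A] {w p : A} (hw : star w * w = 1)
    (hp : IsStarProjection p) : IsStarProjection (w * p * star w) := by
  have hpp : p * p = p := hp.isIdempotentElem
  refine ⟨?_, ?_⟩
  · unfold IsIdempotentElem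
    calc w * p * star w * (w * p * star w) = w * p * (star w * w) * p * star w := by
          simp only [mul_assoc]
      _ = w * (p * p) * star w := by rw [hw, mul_one]; simp only [mul_assoc]
      _ = _ := by rw [hpp]
  · unfold IsSelfAdjoint
    simp only [star_mul, star_star, hp.isSelfAdjoint.star_eq, mul_assoc]

theorem lemmaGR {V₁ V₂ : E →L[ℂ] E} (hV : CuntzPair V₁ V₂) (N : ℕ) (s : Multiset (E →L[ℂ] E))
    (hs : ∀ p ∈ s, IsStarProjection p) (hsum : s.sum = (N : ℂ) • (1 : E →L[ℂ] E))
    (v v' : E →L[ℂ] E) (hv : star v * v = 1) (hv' : star v' * v' = 1) (hvv : star v' * v = 0)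
    (hsv : ∀ p ∈ s, star v' * p * v = 0)
    (m : (E →L[ℂ] E) → ℂ) (C : ℝ) (hm : FAB m C) :
    (s.map m).sum = N * m 1 := by
  have hvv' : star v * v' = 0 := by
    have := congrArg star hvv; simpa using this
  set R := v * star v with hRd
  set R' := v' * star v' with hRd'
  have hR : IsStarProjection R := iso_isp hv
  have hR' : IsStarProjection R' := iso_isp hv'
  have hRv : R * v = v := by rw [hRd, mul_assoc, hv, mul_one]
  have hRv' : R' * v' = v' := by rw [hRd', mul_assoc, hv', mul_one]
  have hRvo : R' * v = 0 := by rw [hRd', mul_assoc, hvv, mul_zero]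
  have hRvo' : R * v' = 0 := by rw [hRd, mul_assoc, hvv', mul_zero]
  have hRR : R' * R = 0 := by rw [hRd, ← mul_assoc, hRvo, zero_mul]
  have hRR2 : R * R' = 0 := by rw [hRd', ← mul_assoc, hRvo', zero_mul]
  have hsp : ∀ p, ∃ a : E →L[ℂ] E, p ∈ s →
      IsStarProjection a ∧ p * a = a ∧ a * R = 0 ∧ (p - a) * R' = 0 := by
    intro p
    by_cases hp : p ∈ s
    · obtain ⟨a, ha⟩ := split_proj p R R' (hs p hp) hR hR' (by
        calc R' * p * R = v' * (star v' * p * v) * star v := by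
              rw [hRd, hRd']; simp only [mul_assoc]
          _ = 0 := by rw [hsv p hp]; simp)
      exact ⟨a, fun _ => ha⟩
    · exact ⟨0, fun h => absurd h hp⟩
  choose α hα using hsp
  set r := v * V₁ with hr
  set w := v * V₂ with hw
  clear_value w r
  have hrr : star r * r = 1 := by
    calc star r * r = star V₁ * (star v * v) * V₁ := by rw [hr, star_mul]; simp only [mul_assoc]
      _ = 1 := by rw [hv, mul_one, hV.h11]
  have hww : star w * w = 1 := by
    calc star w * w = star V₂ * (star v * v) * V₂ := by rw [hw, star_mul]; simp only [mul_assoc]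
      _ = 1 := by rw [hv, mul_one, hV.h22]
  have hwr : star w * r = 0 := by
    calc star w * r = star V₂ * (star v * v) * V₁ := by
          rw [hr, hw, star_mul]; simp only [mul_assoc]
      _ = 0 := by rw [hv, mul_one, hV.h21]
  have hwv' : star w * v' = 0 := by
    rw [hw, star_mul, mul_assoc, hvv', mul_zero]
  set Z := 1 - R - R' with hZd
  have hZ : IsStarProjection Z := by
    have h1 : IsStarProjection (R + R') := by
      have := isp_sum Finset.univ ![R, R'] (by simp [Fin.forall_fin_two, hR, hR'])
        (by simp [Fin.forall_fin_two, hRR, hRR2])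
      simpa using this
    have := h1.one_sub
    rwa [← sub_sub] at this
  have hZs : star Z = Z := hZ.isSelfAdjoint.star_eq
  have hZZ : Z * Z = Z := hZ.isIdempotentElem
  have hZv : Z * v = 0 := by rw [hZd, sub_mul, sub_mul, hRv, hRvo]; simp
  have hZv' : Z * v' = 0 := by rw [hZd, sub_mul, sub_mul, hRv', hRvo']; simp
  have hZr : Z * r = 0 := by rw [hr, ← mul_assoc, hZv, zero_mul]
  have hZw : Z * w = 0 := by rw [hw, ← mul_assoc, hZv, zero_mul]
  set x := (s.map α).sum with hx
  have hxsum : ∀ y : E →L[ℂ] E, x * y = (s.map (fun p => α p * y)).sum := by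
    intro y; rw [hx, ← Multiset.sum_map_mul_right]
  set X := x - (N : ℂ) • R' with hX
  have hXR : X * R = 0 := by
    have : (s.map (fun p => α p * R)) = s.map (fun _ => 0) :=
      Multiset.map_congr rfl fun p hp => (hα p hp).2.2.1
    rw [hX, sub_mul, hxsum, this, smul_mul_assoc, hRR]; simp
  have hXR' : X * R' = 0 := by
    have : (s.map (fun p => α p * R')) = s.map (fun p => p * R') :=
      Multiset.map_congr rfl fun p hp => by
        have := (hα p hp).2.2.2
        rw [sub_mul, sub_eq_zero] at this
        exact this.symm
    have hR2 : R' * R' = R' := hR'.isIdempotentElem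
    rw [hX, sub_mul, hxsum, this, smul_mul_assoc, hR2, Multiset.sum_map_mul_right]
    simp [hsum]
  have hXZ : X * Z = X := by rw [hZd, mul_sub, mul_sub, hXR, hXR']; simp
  have hXs : IsSelfAdjoint X := by
    refine IsSelfAdjoint.sub ?_ ?_
    · unfold IsSelfAdjoint
      rw [hx, ← starAddEquiv_apply, map_multiset_sum, Multiset.map_map]
      congr 1
      exact Multiset.map_congr rfl fun p hp => (hα p hp).1.isSelfAdjoint.star_eq
    · exact IsSelfAdjoint.smul (by simp [IsSelfAdjoint]) hR'.isSelfAdjoint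
  obtain ⟨M, hM⟩ := exists_nat_gt ‖X‖
  have hM0 : (0 : ℝ) < M := (norm_nonneg _).trans_lt hM
  have hMC : (M : ℂ) ≠ 0 := by
    have := hM0.ne'
    exact_mod_cast this
  set a := (1 / M : ℂ) • X with had
  have ha : IsSelfAdjoint a := IsSelfAdjoint.smul (by simp [IsSelfAdjoint]) hXs
  have ha1 : ‖a‖ ≤ 1 := by
    rw [had, norm_smul]
    simp only [norm_div, norm_one, Complex.norm_natCast]
    rw [one_div, inv_mul_le_iff₀ hM0, mul_one]
    exact hM.le
  have haZ : a * Z = a := by rw [had, smul_mul_assoc, hXZ]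
  have hZa : Z * a = a := by
    have := congrArg star haZ; rwa [star_mul, ha.star_eq, hZs] at this
  obtain ⟨P, Q, hP, hQ, hPQ, hPQr⟩ := plemma a Z Z (w * Z) ha ha1 hZ haZ (by rw [hZs, hZZ])
    (by rw [star_mul, hZs, mul_assoc, ← mul_assoc (star w), hww, one_mul, hZZ]) hZZ
    (by rw [mul_assoc, hZZ]) (by rw [hZs, ← mul_assoc, hZw, zero_mul])
  have hPQ2 : a - w * a * star w = P + Q - Z - w * Z * star w := by
    have e1 : Z * a * star Z = a := by rw [hZs, hZa, haZ]
    have e2 : w * Z * a * star (w * Z) = w * a * star w := by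
      rw [star_mul, hZs, mul_assoc w, hZa, mul_assoc w, ← mul_assoc a, haZ, mul_assoc]
    have e3 : w * Z * star (w * Z) = w * Z * star w := by
      rw [star_mul, hZs, mul_assoc w, ← mul_assoc Z, hZZ, mul_assoc]
    have e4 : Z * star Z = Z := by rw [hZs, hZZ]
    rw [e1, e2, e3, e4] at hPQ
    exact hPQ
  have hXa : X = (M : ℂ) • a := by rw [had, smul_smul]; simp [hMC]
  have hXrel : X = (M : ℂ) • (P + Q - Z - w * Z * star w) + w * X * star w := by
    rw [← hPQ2, hXa, smul_sub]; simp
  have hwX : w * X * star w = (s.map (fun p => w * α p * star w)).sum -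
      (N : ℂ) • (w * R' * star w) := by
    rw [hX, mul_sub, sub_mul, hx, Multiset.sum_map_mul_right, Multiset.sum_map_mul_left]; simp
  -- relation A
  have relA := lemmaLR hV hrr
    (s.map α + Multiset.replicate M Z + Multiset.replicate M (w * Z * star w) +
      Multiset.replicate N (w * R' * star w))
    (Multiset.replicate N R' + Multiset.replicate M P + Multiset.replicate M Q +
      s.map (fun p => w * α p * star w)) ?_ ?_ ?_ m C hm
  rotate_left
  · have hpr : ∀ p ∈ s, α p * r = 0 := by
      intro p hp
      rw [hr, ← mul_assoc, ← hRv, ← mul_assoc, (hα p hp).2.2.1]; simp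
    intro q hq
    simp only [Multiset.mem_add, Multiset.mem_map, Multiset.mem_replicate] at hq
    rcases hq with ((⟨p, hp, rfl⟩ | ⟨_, rfl⟩) | ⟨_, rfl⟩) | ⟨_, rfl⟩
    · exact ⟨(hα p hp).1, hpr p hp⟩
    · exact ⟨hZ, hZr⟩
    · exact ⟨isp_conj hww hZ, by rw [mul_assoc, hwr, mul_zero]⟩
    · exact ⟨isp_conj hww hR', by rw [mul_assoc, hwr, mul_zero]⟩
  · have hPQ' := hPQr r (by rw [hZs, hZr]) (by rw [star_mul, mul_assoc, hwr, mul_zero])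
    intro q hq
    simp only [Multiset.mem_add, Multiset.mem_map, Multiset.mem_replicate] at hq
    rcases hq with ((⟨_, rfl⟩ | ⟨_, rfl⟩) | ⟨_, rfl⟩) | ⟨p, hp, rfl⟩
    · exact ⟨hR', by rw [hr, ← mul_assoc, hRvo, zero_mul]⟩
    · exact ⟨hP, hPQ'.1⟩
    · exact ⟨hQ, hPQ'.2⟩
    · exact ⟨isp_conj hww (hα p hp).1, by rw [mul_assoc, hwr, mul_zero]⟩
  · simp only [Multiset.sum_add, Multiset.sum_replicate, ← Nat.cast_smul_eq_nsmul ℂ]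
    rw [hwX] at hXrel
    rw [← sub_eq_zero] at hXrel ⊢
    rw [← hXrel, hX]
    module
  have relB := lemmaLR hV hv'
    (s.map (fun p => p - α p) + Multiset.replicate M P + Multiset.replicate M Q +
      s.map (fun p => w * α p * star w))
    (Multiset.replicate N (1 - R') + Multiset.replicate M Z +
      Multiset.replicate M (w * Z * star w) + Multiset.replicate N (w * R' * star w))
     ?_ ?_ ?_ m C hm
  rotate_left
  · have hpr : ∀ p ∈ s, (p - α p) * v' = 0 := by
      intro p hp
      rw [← hRv', ← mul_assoc, (hα p hp).2.2.2]; simp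
    have hPQ' := hPQr v' (by rw [hZs, hZv']) (by rw [star_mul, mul_assoc, hwv', mul_zero])
    intro q hq
    simp only [Multiset.mem_add, Multiset.mem_map, Multiset.mem_replicate] at hq
    rcases hq with ((⟨p, hp, rfl⟩ | ⟨_, rfl⟩) | ⟨_, rfl⟩) | ⟨p, hp, rfl⟩
    · exact ⟨(isp_sub (hs p hp) (hα p hp).1 (hα p hp).2.1).1, hpr p hp⟩
    · exact ⟨hP, hPQ'.1⟩
    · exact ⟨hQ, hPQ'.2⟩
    · exact ⟨isp_conj hww (hα p hp).1, by rw [mul_assoc, hwv', mul_zero]⟩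
  · intro q hq
    simp only [Multiset.mem_add, Multiset.mem_map, Multiset.mem_replicate] at hq
    rcases hq with ((⟨_, rfl⟩ | ⟨_, rfl⟩) | ⟨_, rfl⟩) | ⟨_, rfl⟩
    · exact ⟨hR'.one_sub, by rw [sub_mul, hRv', one_mul, sub_self]⟩
    · exact ⟨hZ, hZv'⟩
    · exact ⟨isp_conj hww hZ, by rw [mul_assoc, hwv', mul_zero]⟩
    · exact ⟨isp_conj hww hR', by rw [mul_assoc, hwv', mul_zero]⟩
  · simp only [Multiset.sum_add, Multiset.sum_replicate, ← Nat.cast_smul_eq_nsmul ℂ,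
      Multiset.sum_map_sub, Multiset.map_id', hsum]
    rw [hwX] at hXrel
    rw [← sub_eq_zero] at hXrel ⊢
    rw [← neg_eq_zero] at hXrel
    rw [← hXrel, hX]
    module
  have hmp : (s.map m).sum = (s.map (fun p => m (α p))).sum + (s.map (fun p => m (p - α p))).sum := by
    rw [← Multiset.sum_map_add]
    congr 1
    refine Multiset.map_congr rfl fun p hp => ?_
    obtain ⟨h1, h2⟩ := isp_sub (hs p hp) (hα p hp).1 (hα p hp).2.1
    rw [← hm.add _ _ (hα p hp).1 h1 h2, add_sub_cancel]
  have hm1 : m 1 = m R' + m (1 - R') := by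
    rw [← hm.add _ _ hR' hR'.one_sub (by rw [mul_sub, hR'.isIdempotentElem.eq, mul_one, sub_self]),
      add_sub_cancel]
  simp only [Multiset.map_add, Multiset.sum_add, Multiset.map_replicate, Multiset.sum_replicate,
    Multiset.map_map, Function.comp_def, nsmul_eq_mul] at relA relB
  rw [hmp, hm1]
  linear_combination relA + relB

/-- separation hypothesis -/
def SepProp (E : Type u) [NormedAddCommGroup E] [InnerProductSpace ℂ E] [CompleteSpace E] : Prop :=
  ∀ F : Multiset (E →L[ℂ] E), ∃ v v' : E →L[ℂ] E, star v * v = 1 ∧ star v' * v' = 1 ∧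
    star v' * v = 0 ∧ ∀ x ∈ F, star v' * x * v = 0

theorem lemmaGR2 {V₁ V₂ : E →L[ℂ] E} (hV : CuntzPair V₁ V₂) (hsep : SepProp E)
    (s t : Multiset (E →L[ℂ] E))
    (hs : ∀ p ∈ s, IsStarProjection p) (ht : ∀ p ∈ t, IsStarProjection p) (hsum : s.sum = t.sum)
    (m : (E →L[ℂ] E) → ℂ) (C : ℝ) (hm : FAB m C) :
    (s.map m).sum = (t.map m).sum := by
  obtain ⟨v, v', hv, hv', hvv, hx⟩ := hsep (s + t.map (fun q => 1 - q))
  have key := lemmaGR hV t.card (s + t.map (fun q => 1 - q)) ?_ ?_ v v' hv hv' hvv hx m C hm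
  · rw [Multiset.map_add, Multiset.sum_add, Multiset.map_map] at key
    have e : (t.map (m ∘ fun q => 1 - q)).sum = (t.map (fun q => m 1 - m q)).sum := by
      congr 1
      refine Multiset.map_congr rfl fun q hq => ?_
      have := hm.add _ _ (ht q hq) (ht q hq).one_sub
        (by rw [mul_sub, (ht q hq).isIdempotentElem.eq, mul_one, sub_self])
      rw [add_sub_cancel] at this
      simp only [Function.comp]
      rw [this]; ring
    rw [e, Multiset.sum_map_sub] at key
    simp at key
    linear_combination key
  · intro p hp
    simp only [Multiset.mem_add, Multiset.mem_map] at hp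
    rcases hp with hp | ⟨q, hq, rfl⟩
    · exact hs p hp
    · exact (ht q hq).one_sub
  · rw [Multiset.sum_add, Multiset.sum_map_sub, hsum]
    simp [Nat.cast_smul_eq_nsmul]
end opD

section algF
variable {A : Type*} [CStarAlgebra A]

/-- `x` is a difference of sums of at most `n` projections. -/
def PRep (x : A) (n : ℕ) : Prop := ∃ s t : Multiset A, (∀ p ∈ s, IsStarProjection p) ∧
  (∀ p ∈ t, IsStarProjection p) ∧ x = s.sum - t.sum ∧ s.card ≤ n ∧ t.card ≤ n

theorem PRep.add {x y : A} {n k : ℕ} (hx : PRep x n) (hy : PRep y k) : PRep (x + y) (n + k) := by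
  obtain ⟨s, t, hs, ht, rfl, h1, h2⟩ := hx
  obtain ⟨s', t', hs', ht', rfl, h1', h2'⟩ := hy
  refine ⟨s + s', t + t', ?_, ?_, ?_, ?_, ?_⟩
  · intro p hp; rcases Multiset.mem_add.1 hp with h | h
    exacts [hs p h, hs' p h]
  · intro p hp; rcases Multiset.mem_add.1 hp with h | h
    exacts [ht p h, ht' p h]
  · simp only [Multiset.sum_add]; abel
  · simp only [Multiset.card_add]; omega
  · simp only [Multiset.card_add]; omega

theorem PRep.neg {x : A} {n : ℕ} (hx : PRep x n) : PRep (-x) n := by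
  obtain ⟨s, t, hs, ht, rfl, h1, h2⟩ := hx
  exact ⟨t, s, ht, hs, by abel, h2, h1⟩

theorem PRep.sub {x y : A} {n k : ℕ} (hx : PRep x n) (hy : PRep y k) : PRep (x - y) (n + k) := by
  rw [sub_eq_add_neg]; exact hx.add hy.neg

theorem rep_bracket (a g h : A) (ha : IsSelfAdjoint a) (ha1 : ‖a‖ ≤ 1) (hg : star g * g = 1)
    (hh : star h * h = 1) (hgh : star g * h = 0) : PRep (g * a * star g - h * a * star h) 2 := by
  obtain ⟨P, Q, hP, hQ, hPQ, -⟩ := plemma a 1 g h ha ha1 (.one A) (mul_one a) hg hh (mul_one g)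
    (mul_one h) hgh
  refine ⟨{P, Q}, {g * star g, h * star h}, ?_, ?_, ?_, by simp, by simp⟩
  · simp [hP, hQ]
  · simp [iso_isp hg, iso_isp hh]
  · rw [hPQ]; simp; abel

theorem rep_block {V₁ V₂ : A} (hV : CuntzPair V₁ V₂)
    (hτ : ∀ y : A, IsSelfAdjoint y → ∃ t : A, IsSelfAdjoint t ∧ ‖t‖ ≤ ‖y‖ ∧
      t = V₁ * y * star V₁ + V₂ * t * star V₂)
    (y g c : A) (hy : IsSelfAdjoint y) (hy1 : ‖y‖ ≤ 1) (hg : star g * g = 1)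
    (hc : star c * c = 1) (hgc : star g * c = 0) : PRep (g * y * star g) 4 := by
  obtain ⟨t, ht, ht1, hty⟩ := hτ y hy
  have hcg : star c * g = 0 := by
    have := congrArg star hgc; simpa using this
  have gc : ∀ z, star g * (c * z) = 0 := fun z => by rw [← mul_assoc, hgc, zero_mul]
  have cg : ∀ z, star c * (g * z) = 0 := fun z => by rw [← mul_assoc, hcg, zero_mul]
  have gg : ∀ z, star g * (g * z) = z := fun z => by rw [← mul_assoc, hg, one_mul]
  have cc : ∀ z, star c * (c * z) = z := fun z => by rw [← mul_assoc, hc, one_mul]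
  have v11 : ∀ z, star V₁ * (V₁ * z) = z := fun z => by rw [← mul_assoc, hV.h11, one_mul]
  have v22 : ∀ z, star V₂ * (V₂ * z) = z := fun z => by rw [← mul_assoc, hV.h22, one_mul]
  have v12 : ∀ z, star V₁ * (V₂ * z) = 0 := fun z => by rw [← mul_assoc, hV.h12, zero_mul]
  have v21 : ∀ z, star V₂ * (V₁ * z) = 0 := fun z => by rw [← mul_assoc, hV.h21, zero_mul]
  set h := g * star V₁ + c * V₁ * star V₂ with hh
  have h1 : star h * h = 1 := by
    rw [hh]
    simp only [star_add, star_mul, star_star, add_mul, mul_add, mul_assoc, gc, cg, gg, cc, v11,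
      mul_zero, add_zero, zero_add, hV.hsum]
  have h2 : star h * (c * V₂) = 0 := by
    rw [hh]
    simp only [star_add, star_mul, star_star, add_mul, mul_add, mul_assoc, gc, cg, gg, cc, v11,
      mul_zero, add_zero, zero_add, hV.h12]
  have h3 : h * t * star h = g * y * star g + (c * V₁) * t * star (c * V₁) := by
    have e1 : h * V₁ = g := by
      rw [hh]; simp only [add_mul, mul_assoc, hV.h11, hV.h21, mul_one, mul_zero, add_zero]
    have e2 : h * V₂ = c * V₁ := by
      rw [hh]; simp only [add_mul, mul_assoc, hV.h12, hV.h22, mul_one, mul_zero, zero_add]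
    conv_lhs => rw [hty]
    rw [← e2]
    conv_rhs => rw [← e1]
    simp only [star_mul, mul_add, add_mul, mul_assoc]
  have hc0 : star (c * V₁) * (c * V₁) = 1 := by
    simp only [star_mul, mul_assoc, cc, hV.h11]
  have hc1 : star (c * V₂) * (c * V₂) = 1 := by
    simp only [star_mul, mul_assoc, cc, hV.h22]
  have hc10 : star (c * V₂) * (c * V₁) = 0 := by
    simp only [star_mul, mul_assoc, cc, hV.h21]
  have := (rep_bracket t h (c * V₂) ht (ht1.trans hy1) h1 hc1 h2).add
    (rep_bracket t (c * V₂) (c * V₁) ht (ht1.trans hy1) hc1 hc0 hc10)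
  rw [h3] at this
  convert this using 1
  abel

theorem norm_iso_le {g : A} (hg : star g * g = 1) : ‖g‖ ≤ 1 := by
  obtain (_ | _) := subsingleton_or_nontrivial A
  · rw [Subsingleton.elim g 0]; simp
  · have := CStarRing.norm_star_mul_self (x := g)
    rw [hg, norm_one] at this
    nlinarith [norm_nonneg g]

theorem rep_corner {V₁ V₂ : A} (hV : CuntzPair V₁ V₂)
    (hτ : ∀ y : A, IsSelfAdjoint y → ∃ t : A, IsSelfAdjoint t ∧ ‖t‖ ≤ ‖y‖ ∧
      t = V₁ * y * star V₁ + V₂ * t * star V₂)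
    (x g c : A) (hx : IsSelfAdjoint x) (hx1 : ‖x‖ ≤ 1) (hg : star g * g = 1)
    (hc : star c * c = 1) (hgc : star g * c = 0) : PRep (g * star g * x * (g * star g)) 4 := by
  have := rep_block hV hτ (star g * x * g) g c ?_ ?_ hg hc hgc
  · convert this using 1
    simp only [mul_assoc]
  · unfold IsSelfAdjoint; simp only [star_mul, star_star, hx.star_eq, mul_assoc]
  · have h1 := norm_iso_le hg
    calc ‖star g * x * g‖ ≤ ‖star g‖ * ‖x‖ * ‖g‖ :=
          (norm_mul_le _ _).trans (by gcongr; exact norm_mul_le _ _)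
      _ ≤ 1 * 1 * 1 := by rw [norm_star]; gcongr
      _ = 1 := by norm_num

theorem rep_all {V₁ V₂ : A} (hV : CuntzPair V₁ V₂)
    (hτ : ∀ y : A, IsSelfAdjoint y → ∃ t : A, IsSelfAdjoint t ∧ ‖t‖ ≤ ‖y‖ ∧
      t = V₁ * y * star V₁ + V₂ * t * star V₂)
    (x : A) (hx : IsSelfAdjoint x) (hx1 : ‖x‖ ≤ 1) : PRep x 24 := by
  have v11 : ∀ z, star V₁ * (V₁ * z) = z := fun z => by rw [← mul_assoc, hV.h11, one_mul]
  have v22 : ∀ z, star V₂ * (V₂ * z) = z := fun z => by rw [← mul_assoc, hV.h22, one_mul]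
  have v12 : ∀ z, star V₁ * (V₂ * z) = 0 := fun z => by rw [← mul_assoc, hV.h12, zero_mul]
  have v21 : ∀ z, star V₂ * (V₁ * z) = 0 := fun z => by rw [← mul_assoc, hV.h21, zero_mul]
  have b1 := rep_corner hV hτ x V₁ V₂ hx hx1 hV.h11 hV.h22 hV.h12
  have b2 := rep_corner hV hτ x (V₂ * V₁) V₁ hx hx1
    (by simp only [star_mul, mul_assoc, v22, hV.h11]) hV.h11
    (by simp only [star_mul, mul_assoc, hV.h21, mul_zero])
  have b3 := rep_corner hV hτ x (V₂ * V₂) V₁ hx hx1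
    (by simp only [star_mul, mul_assoc, v22, hV.h22]) hV.h11
    (by simp only [star_mul, mul_assoc, hV.h21, mul_zero])
  have b23 := rep_corner hV hτ x V₂ V₁ hx hx1 hV.h22 hV.h11 hV.h21
  have b12 := rep_corner hV hτ x (V₁ * star V₁ + V₂ * V₁ * star V₂) (V₂ * V₂) hx hx1
    (by simp only [star_add, star_mul, star_star, add_mul, mul_add, mul_assoc, v11, v12, v21, v22,
          mul_zero, add_zero, zero_add, hV.hsum])
    (by simp only [star_mul, mul_assoc, v22, hV.h22])
    (by simp only [star_add, star_mul, star_star, add_mul, mul_add, mul_assoc, v11, v12, v21, v22,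
          mul_zero, add_zero, zero_add, hV.h12])
  have b13 := rep_corner hV hτ x (V₁ * star V₁ + V₂ * V₂ * star V₂) (V₂ * V₁) hx hx1
    (by simp only [star_add, star_mul, star_star, add_mul, mul_add, mul_assoc, v11, v12, v21, v22,
          mul_zero, add_zero, zero_add, hV.hsum])
    (by simp only [star_mul, mul_assoc, v22, hV.h11])
    (by simp only [star_add, star_mul, star_star, add_mul, mul_add, mul_assoc, v11, v12, v21, v22,
          mul_zero, add_zero, zero_add, hV.h21])
  have e12 : (V₁ * star V₁ + V₂ * V₁ * star V₂) * star (V₁ * star V₁ + V₂ * V₁ * star V₂) =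
      V₁ * star V₁ + V₂ * V₁ * star (V₂ * V₁) := by
    simp only [star_add, star_mul, star_star, add_mul, mul_add, mul_assoc, v11, v12, v21, v22,
          mul_zero, add_zero, zero_add]
  have e13 : (V₁ * star V₁ + V₂ * V₂ * star V₂) * star (V₁ * star V₁ + V₂ * V₂ * star V₂) =
      V₁ * star V₁ + V₂ * V₂ * star (V₂ * V₂) := by
    simp only [star_add, star_mul, star_star, add_mul, mul_add, mul_assoc, v11, v12, v21, v22,
          mul_zero, add_zero, zero_add]
  have e23 : V₂ * star V₂ = V₂ * V₁ * star (V₂ * V₁) + V₂ * V₂ * star (V₂ * V₂) := by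
    calc V₂ * star V₂ = V₂ * (V₁ * star V₁ + V₂ * star V₂) * star V₂ := by rw [hV.hsum, mul_one]
      _ = _ := by simp only [mul_add, add_mul, star_mul, mul_assoc]
  rw [e12] at b12
  rw [e13] at b13
  rw [e23] at b23
  have hone := hV.hsum
  rw [e23] at hone
  generalize V₁ * star V₁ = E₁ at *
  generalize V₂ * V₁ * star (V₂ * V₁) = E₂ at *
  generalize V₂ * V₂ * star (V₂ * V₂) = E₃ at *
  have := (((((b12.add b13).add b23).sub b1).sub b2).sub b3)
  convert this using 1
  calc x = (E₁ + (E₂ + E₃)) * x * (E₁ + (E₂ + E₃)) := by rw [hone, one_mul, mul_one]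
    _ = _ := by simp only [mul_add, add_mul]; abel

/-- Extension package -/
structure ExtPkg (A : Type*) [CStarAlgebra A] : Prop where
  rep : ∀ x : A, IsSelfAdjoint x → ‖x‖ ≤ 1 → PRep x 24
  gr : ∀ (s t : Multiset A), (∀ p ∈ s, IsStarProjection p) → (∀ p ∈ t, IsStarProjection p) →
    s.sum = t.sum → ∀ (m : A → ℂ) (C : ℝ), FAB m C → (s.map m).sum = (t.map m).sum

theorem ExtPkg.rep' (h : ExtPkg A) (x : A) (hx : IsSelfAdjoint x) : ∃ n, PRep x n := by
  obtain ⟨M, hM⟩ := exists_nat_gt ‖x‖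
  have hM0 : (0 : ℝ) < M := (norm_nonneg _).trans_lt hM
  obtain ⟨s, t, hs, ht, hst, h1, h2⟩ := h.rep ((1 / M : ℝ) • x) (IsSelfAdjoint.smul (IsSelfAdjoint.all _) hx)
    (by rw [norm_smul]; simp
        rw [inv_mul_le_iff₀ hM0, mul_one]
        exact hM.le)
  refine ⟨M * 24, M • s, M • t, ?_, ?_, ?_, ?_, ?_⟩
  · intro p hp; exact hs p (Multiset.mem_of_mem_nsmul hp)
  · intro p hp; exact ht p (Multiset.mem_of_mem_nsmul hp)
  · rw [Multiset.sum_nsmul, Multiset.sum_nsmul, ← nsmul_sub, ← hst, ← Nat.cast_smul_eq_nsmul ℝ,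
      smul_smul, mul_one_div_cancel hM0.ne', one_smul]
  · rw [Multiset.card_nsmul]; gcongr
  · rw [Multiset.card_nsmul]; gcongr

theorem ExtPkg.unique (h : ExtPkg A) (F₁ F₂ : A →ₗ[ℂ] ℂ)
    (hF : ∀ p, IsStarProjection p → F₁ p = F₂ p) : F₁ = F₂ := by
  have hsum : ∀ s : Multiset A, (∀ p ∈ s, IsStarProjection p) → F₁ s.sum = F₂ s.sum := by
    intro s hs
    rw [map_multiset_sum, map_multiset_sum]
    congr 1
    exact Multiset.map_congr rfl fun p hp => hF p (hs p hp)
  have hsa : ∀ x : A, IsSelfAdjoint x → F₁ x = F₂ x := by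
    intro x hx
    obtain ⟨n, s, t, hs, ht, rfl, -, -⟩ := h.rep' x hx
    rw [map_sub, map_sub, hsum s hs, hsum t ht]
  ext x
  rw [← realPart_add_I_smul_imaginaryPart x, map_add, map_add, map_smul, map_smul,
    hsa _ (realPart x).2, hsa _ (imaginaryPart x).2]

theorem ExtPkg.exists_ext (h : ExtPkg A) (m : A → ℂ) (C : ℝ) (hm : FAB m C) :
    ∃ F : A →ₗ[ℂ] ℂ, (∀ p, IsStarProjection p → F p = m p) ∧ ∀ x, ‖F x‖ ≤ 96 * C * ‖x‖ := by
  have hex : ∀ x : selfAdjoint A, ∃ y : ℂ, ∀ s t : Multiset A, (∀ p ∈ s, IsStarProjection p) →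
      (∀ p ∈ t, IsStarProjection p) → (x : A) = s.sum - t.sum →
      y = (s.map m).sum - (t.map m).sum := by
    intro x
    obtain ⟨n, s, t, hs, ht, hst, -, -⟩ := h.rep' (x : A) x.2
    refine ⟨(s.map m).sum - (t.map m).sum, fun s' t' hs' ht' hst' => ?_⟩
    have := h.gr (s + t') (s' + t) ?_ ?_ ?_ m C hm
    · simp only [Multiset.map_add, Multiset.sum_add] at this
      linear_combination this
    · intro p hp; rcases Multiset.mem_add.1 hp with h | h
      exacts [hs p h, ht' p h]
    · intro p hp; rcases Multiset.mem_add.1 hp with h | h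
      exacts [hs' p h, ht p h]
    · rw [hst] at hst'
      rw [Multiset.sum_add, Multiset.sum_add]
      rw [sub_eq_sub_iff_add_eq_add] at hst'
      exact hst'
  choose f hf using hex
  have hadd : ∀ x y, f (x + y) = f x + f y := by
    intro x y
    obtain ⟨n, s, t, hs, ht, hst, -, -⟩ := h.rep' (x : A) x.2
    obtain ⟨n', s', t', hs', ht', hst', -, -⟩ := h.rep' (y : A) y.2
    rw [hf x s t hs ht hst, hf y s' t' hs' ht' hst', hf (x + y) (s + s') (t + t')]
    · simp only [Multiset.map_add, Multiset.sum_add]; ring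
    · intro p hp; rcases Multiset.mem_add.1 hp with h | h
      exacts [hs p h, hs' p h]
    · intro p hp; rcases Multiset.mem_add.1 hp with h | h
      exacts [ht p h, ht' p h]
    · rw [AddSubgroup.coe_add, hst, hst']; simp only [Multiset.sum_add]; abel
  have hms : ∀ s : Multiset A, (∀ p ∈ s, IsStarProjection p) → s.card ≤ 24 →
      ‖(s.map m).sum‖ ≤ 24 * C := by
    intro s hs hc
    refine (norm_multiset_sum_le _).trans ?_
    rw [Multiset.map_map]
    have hC := hm.nonneg
    refine (Multiset.sum_le_card_nsmul _ C ?_).trans ?_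
    · intro x hx
      obtain ⟨p, hp, rfl⟩ := Multiset.mem_map.1 hx
      exact hm.bdd p (hs p hp)
    · rw [Multiset.card_map, nsmul_eq_mul]
      have : (s.card : ℝ) ≤ 24 := by exact_mod_cast hc
      gcongr
  have hball : ∀ x : selfAdjoint A, ‖x‖ ≤ 1 → ‖f x‖ ≤ 48 * C := by
    intro x hx
    obtain ⟨s, t, hs, ht, hst, h1, h2⟩ := h.rep (x : A) x.2 hx
    rw [hf x s t hs ht hst]
    refine (norm_sub_le _ _).trans ?_
    linarith [hms s hs h1, hms t ht h2]
  let f0 : selfAdjoint A →+ ℂ := AddMonoidHom.mk' f hadd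
  have hC := hm.nonneg
  have hcont : Continuous f0 := by
    refine continuous_of_continuousAt_zero f0 ?_
    rw [Metric.continuousAt_iff]
    intro ε hε
    obtain ⟨n, hn⟩ := exists_nat_gt (48 * C / ε)
    have hn0 : (0 : ℝ) < n := lt_of_le_of_lt (by positivity) hn
    refine ⟨1 / n, by positivity, fun {x} hx => ?_⟩
    rw [dist_zero_right] at hx
    rw [map_zero, dist_zero_right]
    have h1 : ‖n • x‖ ≤ 1 := by
      refine (norm_nsmul_le).trans ?_
      rw [lt_div_iff₀ hn0] at hx
      linarith
    have h2 := hball (n • x) h1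
    have h3 : f (n • x) = n • f x := map_nsmul f0 n x
    rw [h3, nsmul_eq_mul, norm_mul, Complex.norm_natCast] at h2
    rw [div_lt_iff₀ hε] at hn
    change ‖f x‖ < ε
    by_contra hcon
    push Not at hcon
    nlinarith
  let f1 : selfAdjoint A →L[ℝ] ℂ := f0.toRealLinearMap hcont
  have hf1 : ∀ x, f1 x = f x := fun x => rfl
  have hbound : ∀ x, ‖f1 x‖ ≤ 48 * C * ‖x‖ := by
    intro x
    by_cases hx : x = 0
    · simp [hx]
    have hx0 : 0 < ‖x‖ := norm_pos_iff.2 hx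
    have := hball (‖x‖⁻¹ • x) (by rw [norm_smul, norm_inv, norm_norm, inv_mul_cancel₀ hx0.ne'])
    rw [← hf1, map_smul, norm_smul, norm_inv, norm_norm, inv_mul_le_iff₀ hx0] at this
    linarith
  refine ⟨{ toFun := fun x => f1 (realPart x) + Complex.I * f1 (imaginaryPart x)
            map_add' := ?_
            map_smul' := ?_ }, ?_, ?_⟩
  · intro x y; simp only [map_add]; ring
  · intro c x
    simp only [realPart_smul, imaginaryPart_smul, map_sub, map_add, map_smul, RingHom.id_apply,
      Complex.real_smul, smul_eq_mul]
    conv_rhs => rw [← Complex.re_add_im c]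
    linear_combination (-(c.im : ℂ)) * f1 (imaginaryPart x) * Complex.I_mul_I
  · intro p hp
    have h1 : imaginaryPart p = 0 := hp.isSelfAdjoint.imaginaryPart
    have h2 : (realPart p : A) = p := hp.isSelfAdjoint.coe_realPart
    change f1 (realPart p) + Complex.I * f1 (imaginaryPart p) = m p
    rw [h1, map_zero, mul_zero, add_zero, hf1, hf (realPart p) {p} 0]
    · simp
    · simpa using hp
    · simp
    · simpa using h2
  · intro x
    change ‖f1 (realPart x) + Complex.I * f1 (imaginaryPart x)‖ ≤ _
    refine (norm_add_le _ _).trans ?_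
    rw [norm_mul, Complex.norm_I, one_mul]
    have h1 : ‖f1 (realPart x)‖ ≤ 48 * C * ‖x‖ :=
      (hbound _).trans (by gcongr; exact realPart.norm_le x)
    have h2 : ‖f1 (imaginaryPart x)‖ ≤ 48 * C * ‖x‖ :=
      (hbound _).trans (by gcongr; exact imaginaryPart.norm_le x)
    linarith

theorem ExtPkg.bilinear (h : ExtPkg A) (d : A → A → ℂ) (C : ℝ)
    (h1 : ∀ q, IsStarProjection q → FAB (fun p => d p q) C)
    (h2 : ∀ p, IsStarProjection p → FAB (fun q => d p q) C) :
    ∃ D : A →ₗ[ℂ] A →ₗ[ℂ] ℂ, (∀ p q, IsStarProjection p → IsStarProjection q → D p q = d p q) ∧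
      ∀ x y, ‖D x y‖ ≤ 96 * (96 * C) * ‖x‖ * ‖y‖ := by
  have hF : ∀ q : A, ∃ F : A →ₗ[ℂ] ℂ, IsStarProjection q →
      (∀ p, IsStarProjection p → F p = d p q) ∧ ∀ x, ‖F x‖ ≤ 96 * C * ‖x‖ := by
    intro q
    by_cases hq : IsStarProjection q
    · obtain ⟨F, hF⟩ := h.exists_ext _ C (h1 q hq)
      exact ⟨F, fun _ => hF⟩
    · exact ⟨0, fun h => absurd h hq⟩
  choose F hF using hF
  have hG : ∀ x, FAB (fun q => F q x) (96 * C * ‖x‖) := by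
    intro x
    refine ⟨fun p q hp hq hpq => ?_, fun q hq => (hF q hq).2 x⟩
    have hpq' : IsStarProjection (p + q) := by
      have hqp : q * p = 0 := by
        have := congrArg star hpq
        rwa [star_mul, hp.isSelfAdjoint.star_eq, hq.isSelfAdjoint.star_eq, star_zero] at this
      have := isp_sum Finset.univ ![p, q] (by simp [Fin.forall_fin_two, hp, hq])
        (by simp [Fin.forall_fin_two, hpq, hqp])
      simpa using this
    have : F (p + q) = F p + F q := by
      refine h.unique _ _ fun r hr => ?_
      rw [LinearMap.add_apply, (hF _ hpq').1 r hr, (hF _ hp).1 r hr, (hF _ hq).1 r hr]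
      exact (h2 r hr).add p q hp hq hpq
    simp only [this, LinearMap.add_apply]
  choose G hG1 hG2 using fun x => h.exists_ext _ _ (hG x)
  refine ⟨{ toFun := G, map_add' := ?_, map_smul' := ?_ }, ?_, ?_⟩
  · intro x y
    refine h.unique _ _ fun q hq => ?_
    rw [LinearMap.add_apply, hG1 _ q hq, hG1 _ q hq, hG1 _ q hq, map_add]
  · intro c x
    refine h.unique _ _ fun q hq => ?_
    rw [RingHom.id_apply, LinearMap.smul_apply, hG1 _ q hq, hG1 _ q hq, map_smul]
  · intro p q hp hq
    change G p q = _
    rw [hG1 _ q hq, (hF q hq).1 p hp]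
  · intro x y
    change ‖G x y‖ ≤ _
    refine (hG2 x y).trans (le_of_eq ?_)
    ring
end algF

section opH
variable (J : OperatorTensor E G)

theorem OT.ext {T S : G →L[ℂ] G} (h : ∀ a b, T (J.tmul a b) = S (J.tmul a b)) : T = S := by
  refine ContinuousLinearMap.ext_on J.dense_span ?_
  rintro _ ⟨z, rfl⟩
  exact h _ _

theorem OT.ext_inner {T S : G →L[ℂ] G}
    (h : ∀ a b c e, ⟪J.tmul c e, T (J.tmul a b)⟫ = ⟪J.tmul c e, S (J.tmul a b)⟫) : T = S := by
  refine OT.ext J fun a b => ?_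
  have : innerSL ℂ (T (J.tmul a b)) = innerSL ℂ (S (J.tmul a b)) := by
    refine ContinuousLinearMap.ext_on J.dense_span ?_
    rintro _ ⟨z, rfl⟩
    simp only [innerSL_apply_apply]
    rw [← inner_conj_symm, h, inner_conj_symm]
  refine ext_inner_right ℂ fun v => ?_
  exact DFunLike.congr_fun this v

theorem OT.op_mul (x x' y y' : E →L[ℂ] E) : J.op (x * x') (y * y') = J.op x y * J.op x' y' := by
  refine OT.ext J fun a b => ?_
  simp [J.op_tmul]

theorem OT.op_one : J.op 1 1 = 1 := by
  refine OT.ext J fun a b => ?_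
  simp [J.op_tmul]

theorem OT.op_add_left (x x' y : E →L[ℂ] E) : J.op (x + x') y = J.op x y + J.op x' y := by
  refine OT.ext J fun a b => ?_
  simp [J.op_tmul]

theorem OT.op_add_right (x y y' : E →L[ℂ] E) : J.op x (y + y') = J.op x y + J.op x y' := by
  refine OT.ext J fun a b => ?_
  simp [J.op_tmul]

theorem OT.op_smul_left (c : ℂ) (x y : E →L[ℂ] E) : J.op (c • x) y = c • J.op x y := by
  refine OT.ext J fun a b => ?_
  simp [J.op_tmul]

theorem OT.op_smul_right (c : ℂ) (x y : E →L[ℂ] E) : J.op x (c • y) = c • J.op x y := by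
  refine OT.ext J fun a b => ?_
  simp [J.op_tmul]

theorem OT.op_star (x y : E →L[ℂ] E) : star (J.op x y) = J.op (star x) (star y) := by
  refine OT.ext_inner J fun a b c e => ?_
  rw [star_eq_adjoint, ContinuousLinearMap.adjoint_inner_right, J.op_tmul, J.op_tmul,
    J.inner_tmul, J.inner_tmul, star_eq_adjoint, star_eq_adjoint,
    ContinuousLinearMap.adjoint_inner_right, ContinuousLinearMap.adjoint_inner_right]

/-- The operator tensor product as a bilinear map. -/
def OT.opB : (E →L[ℂ] E) →ₗ[ℂ] (E →L[ℂ] E) →ₗ[ℂ] (G →L[ℂ] G) :=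
  LinearMap.mk₂ ℂ J.op (OT.op_add_left J) (OT.op_smul_left J) (OT.op_add_right J)
    (OT.op_smul_right J)

theorem OT.opB_apply (x y : E →L[ℂ] E) : OT.opB J x y = J.op x y := rfl

theorem OT.norm_op_left (x : E →L[ℂ] E) : ‖J.op x 1‖ ≤ ‖x‖ := by
  let f : (E →L[ℂ] E) →⋆ₙₐ[ℂ] (G →L[ℂ] G) :=
    { toFun := fun x => J.op x 1
      map_smul' := fun c x => OT.op_smul_left J c x 1
      map_zero' := by simpa using OT.op_smul_left J 0 0 1
      map_add' := fun x y => OT.op_add_left J x y 1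
      map_mul' := fun x y => by simpa using OT.op_mul J x y 1 1
      map_star' := fun x => by simpa using (OT.op_star J x 1).symm }
  exact NonUnitalStarAlgHom.norm_apply_le f x

theorem OT.norm_op_right (x : E →L[ℂ] E) : ‖J.op 1 x‖ ≤ ‖x‖ := by
  let f : (E →L[ℂ] E) →⋆ₙₐ[ℂ] (G →L[ℂ] G) :=
    { toFun := fun x => J.op 1 x
      map_smul' := fun c x => OT.op_smul_right J c 1 x
      map_zero' := by simpa using OT.op_smul_right J 0 1 0
      map_add' := fun x y => OT.op_add_right J 1 x y
      map_mul' := fun x y => by simpa using OT.op_mul J 1 1 x y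
      map_star' := fun x => by simpa using (OT.op_star J 1 x).symm }
  exact NonUnitalStarAlgHom.norm_apply_le f x

theorem OT.norm_op (x y : E →L[ℂ] E) : ‖J.op x y‖ ≤ ‖x‖ * ‖y‖ := by
  have : J.op x y = J.op x 1 * J.op 1 y := by rw [← OT.op_mul]; simp
  rw [this]
  exact (norm_mul_le _ _).trans (mul_le_mul (OT.norm_op_left J x) (OT.norm_op_right J y)
    (norm_nonneg _) (norm_nonneg _))

theorem OT.norm_tmul (a b : E) : ‖J.tmul a b‖ = ‖a‖ * ‖b‖ := by
  have h := J.inner_tmul a b a b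
  simp only [inner_self_eq_norm_sq_to_K] at h
  have h2 : ‖J.tmul a b‖ ^ 2 = (‖a‖ * ‖b‖) ^ 2 := by
    rw [mul_pow]; exact_mod_cast h
  exact (pow_left_inj₀ (norm_nonneg _) (by positivity) two_ne_zero).1 h2

/-- `b ↦ a ⊗ b` as a continuous map. -/
def OT.tL (a : E) : E →L[ℂ] G :=
  (J.tmul a).mkContinuous ‖a‖ fun b => (OT.norm_tmul J a b).le

theorem OT.tL_apply (a b : E) : OT.tL J a b = J.tmul a b := rfl

theorem OT.tL_adjoint (e a b : E) :
    ContinuousLinearMap.adjoint (OT.tL J e) (J.tmul a b) = ⟪e, a⟫ • b := by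
  refine ext_inner_left ℂ fun v => ?_
  rw [ContinuousLinearMap.adjoint_inner_right, OT.tL_apply, J.inner_tmul, inner_smul_right]

/-- Isometry sending a Hilbert basis to an orthonormal family. -/
theorem iso_exists {ι : Type*} (b : HilbertBasis ι ℂ E) (w : ι → E) (hw : Orthonormal ℂ w) :
    ∃ S : E →L[ℂ] E, star S * S = 1 ∧ ∀ i, S (b i) = w i := by
  classical
  let S : E →ₗᵢ[ℂ] E := hw.orthogonalFamily.linearIsometry.comp b.repr.toLinearIsometry
  refine ⟨S.toContinuousLinearMap, ?_, fun i => ?_⟩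
  · exact (ContinuousLinearMap.norm_map_iff_adjoint_comp_self _).1 fun x => S.norm_map x
  · have h1 : S (b i) = hw.orthogonalFamily.linearIsometry (b.repr (b i)) := rfl
    rw [LinearIsometry.coe_toContinuousLinearMap, h1, HilbertBasis.repr_self, OrthogonalFamily.linearIsometry_apply_single]
    simp

/-- The product Hilbert basis. -/
theorem prod_basis {ι : Type*} (b : HilbertBasis ι ℂ E) :
    ∃ B : HilbertBasis (ι × ι) ℂ G, ∀ z, B z = J.tmul (b z.1) (b z.2) := by
  classical
  have ho : Orthonormal ℂ (fun z : ι × ι => J.tmul (b z.1) (b z.2)) := by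
    rw [orthonormal_iff_ite]
    rintro ⟨i, j⟩ ⟨k, l⟩
    rw [J.inner_tmul, orthonormal_iff_ite.1 b.orthonormal, orthonormal_iff_ite.1 b.orthonormal]
    simp only [Prod.mk.injEq]
    split_ifs <;> simp_all
  have hbot : (Submodule.span ℂ (Set.range (fun z : ι × ι => J.tmul (b z.1) (b z.2))))ᗮ = ⊥ := by
    rw [Submodule.eq_bot_iff]
    intro v hv
    rw [Submodule.mem_orthogonal] at hv
    have hv' : ∀ i j, ⟪J.tmul (b i) (b j), v⟫ = 0 := fun i j =>
      hv _ (Submodule.subset_span ⟨(i, j), rfl⟩)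
    have bd : Dense (Submodule.span ℂ (Set.range b) : Set E) :=
      Submodule.dense_iff_topologicalClosure_eq_top.2 b.dense_span
    have h1 : ∀ i c, ⟪J.tmul (b i) c, v⟫ = 0 := by
      intro i c
      have : (innerSL ℂ v).comp (OT.tL J (b i)) = 0 := by
        refine ContinuousLinearMap.ext_on bd ?_
        rintro _ ⟨j, rfl⟩
        change ⟪v, J.tmul (b i) (b j)⟫ = 0
        rw [← inner_conj_symm, hv', map_zero]
      have := DFunLike.congr_fun this c
      change ⟪v, J.tmul (b i) c⟫ = 0 at this
      rw [← inner_conj_symm, this, map_zero]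
    have h2 : ∀ a c, ⟪J.tmul a c, v⟫ = 0 := by
      intro a c
      have : ((innerSL ℂ v).comp ((J.tmul.flip c).mkContinuous ‖c‖ fun a => by
          rw [LinearMap.flip_apply, OT.norm_tmul, mul_comm])) = 0 := by
        refine ContinuousLinearMap.ext_on bd ?_
        rintro _ ⟨j, rfl⟩
        change ⟪v, J.tmul (b j) c⟫ = 0
        rw [← inner_conj_symm, h1, map_zero]
      have := DFunLike.congr_fun this a
      change ⟪v, J.tmul a c⟫ = 0 at this
      rw [← inner_conj_symm, this, map_zero]
    have : innerSL ℂ v = 0 := by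
      refine ContinuousLinearMap.ext_on J.dense_span ?_
      rintro _ ⟨z, rfl⟩
      change ⟪v, J.tmul _ _⟫ = 0
      rw [← inner_conj_symm, h2, map_zero]
    have := DFunLike.congr_fun this v
    exact inner_self_eq_zero.1 this
  refine ⟨HilbertBasis.mkOfOrthogonalEqBot ho hbot, fun z => ?_⟩
  simp
end opH

section opK

theorem basis_infinite {ι : Type*} (b : HilbertBasis ι ℂ E) (hE : ¬ FiniteDimensional ℂ E) :
    Infinite ι := by
  by_contra h
  rw [not_infinite_iff_finite] at h
  have := Fintype.ofFinite ι
  exact hE (Module.Basis.finiteDimensional_of_finite b.toOrthonormalBasis.toBasis)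

theorem exists_unitary (J : OperatorTensor E G) (hE : ¬ FiniteDimensional ℂ E) : Nonempty (G ≃ₗᵢ[ℂ] E) := by
  obtain ⟨I, b, -⟩ := exists_hilbertBasis ℂ E
  have hI := basis_infinite b hE
  obtain ⟨B, -⟩ := prod_basis J b
  have e : Nonempty (I × I ≃ I) := Cardinal.eq.1 (by simp)
  obtain ⟨e⟩ := e
  let B' : HilbertBasis I ℂ G := HilbertBasis.mk (v := B ∘ e.symm)
    (B.orthonormal.comp _ e.symm.injective) (by
      rw [e.symm.surjective.range_comp]; exact B.dense_span.ge)
  exact ⟨B'.repr.trans b.repr.symm⟩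

theorem exists_shift (hE : ¬ FiniteDimensional ℂ E) : ∃ (S : E →L[ℂ] E) (e₀ : E), ‖e₀‖ = 1 ∧
    star S * S = 1 ∧ (∀ x, ⟪e₀, S x⟫ = 0) ∧ ∀ x, S (star S x) + ⟪e₀, x⟫ • e₀ = x := by
  classical
  obtain ⟨I, b, -⟩ := exists_hilbertBasis ℂ E
  have hI := basis_infinite b hE
  have f : Nonempty (Option I ≃ I) := Cardinal.eq.1 (by simp)
  obtain ⟨f⟩ := f
  have hb := orthonormal_iff_ite.1 b.orthonormal
  obtain ⟨S, hS, hSb⟩ := iso_exists b (fun i => b (f (some i)))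
    (b.orthonormal.comp (fun i => f (some i)) fun i j h => by simpa using h)
  have bd : Dense (Submodule.span ℂ (Set.range b) : Set E) :=
      Submodule.dense_iff_topologicalClosure_eq_top.2 b.dense_span
  have h0 : ∀ x, ⟪b (f none), S x⟫ = 0 := by
    have : (innerSL ℂ (b (f none))).comp S = 0 := by
      refine ContinuousLinearMap.ext_on bd ?_
      rintro _ ⟨j, rfl⟩
      simp [hSb, hb]
    intro x
    exact DFunLike.congr_fun this x
  have hSS : ∀ x, star S (S x) = x := fun x => DFunLike.congr_fun hS x
  refine ⟨S, b (f none), b.orthonormal.1 _, hS, h0, ?_⟩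
  have : S * star S + (innerSL ℂ (b (f none))).smulRight (b (f none)) = 1 := by
    refine ContinuousLinearMap.ext_on bd ?_
    rintro _ ⟨j, rfl⟩
    obtain ⟨k, rfl⟩ := f.surjective j
    cases k with
    | none =>
      have : star S (b (f none)) = 0 := by
        refine ext_inner_right ℂ fun v => ?_
        rw [star_eq_adjoint, ContinuousLinearMap.adjoint_inner_left, h0, inner_zero_left]
      simp [this, b.orthonormal.1]
    | some i =>
      rw [← hSb]
      simp [hSS, h0]
  intro x
  simpa using DFunLike.congr_fun this x

theorem cuntz_exists (J : OperatorTensor E G) (hE : ¬ FiniteDimensional ℂ E) :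
    ∃ V₁ V₂ : E →L[ℂ] E, CuntzPair V₁ V₂ ∧ ∀ y : E →L[ℂ] E, IsSelfAdjoint y →
      ∃ t : E →L[ℂ] E, IsSelfAdjoint t ∧ ‖t‖ ≤ ‖y‖ ∧
      t = V₁ * y * star V₁ + V₂ * t * star V₂ := by
  obtain ⟨U⟩ := exists_unitary J hE
  obtain ⟨S, e₀, he, hS, h0, hsum⟩ := exists_shift hE
  have hSS : ∀ x, star S (S x) = x := fun x => DFunLike.congr_fun hS x
  have hSe : star S e₀ = 0 := by
    refine ext_inner_right ℂ fun v => ?_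
    rw [star_eq_adjoint, ContinuousLinearMap.adjoint_inner_left, h0, inner_zero_left]
  let U' : G →L[ℂ] E := (U.toContinuousLinearEquiv : G →L[ℂ] E)
  let Us : E →L[ℂ] G := (U.symm.toContinuousLinearEquiv : E →L[ℂ] G)
  have aU : ContinuousLinearMap.adjoint U' = Us := LinearIsometryEquiv.adjoint_eq_symm U
  have aUs : ContinuousLinearMap.adjoint Us = U' := LinearIsometryEquiv.adjoint_eq_symm U.symm
  have u1 : Us ∘L U' = 1 := by ext x; exact U.symm_apply_apply x
  have u2 : U' ∘L Us = 1 := by ext x; exact U.apply_symm_apply x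
  have nU : ∀ x, ‖U' x‖ = ‖x‖ := fun x => U.norm_map x
  have nUs : ∀ x, ‖Us x‖ = ‖x‖ := fun x => U.symm.norm_map x
  clear_value U' Us
  have u1' : ∀ x, Us (U' x) = x := fun x => DFunLike.congr_fun u1 x
  have u2' : ∀ x, U' (Us x) = x := fun x => DFunLike.congr_fun u2 x
  set L := OT.tL J e₀ with hL
  set L' := ContinuousLinearMap.adjoint L with hL'
  have hL't : ∀ a b, L' (J.tmul a b) = ⟪e₀, a⟫ • b := OT.tL_adjoint J e₀
  have hLa : ∀ b, L b = J.tmul e₀ b := fun b => rfl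
  clear_value L'
  have hLL : ∀ x, L' (L x) = x := by
    intro x
    rw [hLa, hL't, inner_self_eq_norm_sq_to_K, he]; simp
  have hLS : ∀ x, L' (J.op S 1 x) = 0 := by
    have : L' ∘L J.op S 1 = 0 := by
      refine ContinuousLinearMap.ext_on J.dense_span ?_
      rintro _ ⟨z, rfl⟩
      simp [J.op_tmul, hL't, h0]
    exact fun x => DFunLike.congr_fun this x
  have hop : ∀ y, L ∘L y ∘L L' + J.op S 1 * J.op 1 y * J.op (star S) 1 = J.op 1 y := by
    intro y
    refine OT.ext J fun a b => ?_
    have : J.tmul a (y b) = J.tmul (S (star S a) + ⟪e₀, a⟫ • e₀) (y b) := by rw [hsum]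
    simp only [_root_.add_apply, ContinuousLinearMap.mul_apply', J.op_tmul,
      ContinuousLinearMap.comp_apply, hL't, hLa, one_apply_eq_self, map_smul]
    rw [this]
    simp [J.op_tmul, add_comm]
  have hsV1 : star (U' ∘L L) = L' ∘L Us := by
    rw [star_eq_adjoint, ContinuousLinearMap.adjoint_comp, aU, hL']
  have hsV : ∀ x y, star (U' ∘L J.op x y ∘L Us) = U' ∘L J.op (star x) (star y) ∘L Us := by
    intro x y
    rw [star_eq_adjoint, ContinuousLinearMap.adjoint_comp, ContinuousLinearMap.adjoint_comp, aU,
      aUs, ← OT.op_star, star_eq_adjoint]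
    rfl
  have hop1 : ∀ x x' y y' z, J.op x y (J.op x' y' z) = J.op (x * x') (y * y') z := by
    intros; rw [OT.op_mul]; rfl
  have key : ∀ y : E →L[ℂ] E, U' ∘L J.op 1 y ∘L Us = (U' ∘L L) * y * star (U' ∘L L) +
      (U' ∘L J.op S 1 ∘L Us) * (U' ∘L J.op 1 y ∘L Us) * star (U' ∘L J.op S 1 ∘L Us) := by
    intro y
    rw [hsV1, hsV]
    ext x
    have := DFunLike.congr_fun (hop y) (Us x)
    simp only [_root_.add_apply, ContinuousLinearMap.mul_apply',
      ContinuousLinearMap.comp_apply, star_one] at this ⊢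
    rw [← this, map_add]
    simp [u1']
  refine ⟨U' ∘L L, U' ∘L J.op S 1 ∘L Us, ⟨?_, ?_, ?_, ?_⟩, fun y hy => ?_⟩
  · rw [hsV1]; ext x; simp [u1', hLL]
  · rw [hsV]; ext x
    simp [u1', hop1, hS, OT.op_one, u2']
  · rw [hsV1]; ext x; simp [u1', hLS]
  · have := key 1
    rw [OT.op_one] at this
    have e1 : U' ∘L (1 : G →L[ℂ] G) ∘L Us = 1 := u2
    rw [e1, mul_one, mul_one] at this
    exact this.symm
  · refine ⟨U' ∘L J.op 1 y ∘L Us, ?_, ?_, key y⟩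
    · rw [isSelfAdjoint_iff, hsV, star_one, hy.star_eq]
    · refine ContinuousLinearMap.opNorm_le_bound _ (norm_nonneg _) fun x => ?_
      simp only [ContinuousLinearMap.comp_apply, nU]
      refine (ContinuousLinearMap.le_opNorm _ _).trans ?_
      rw [nUs]
      gcongr
      exact OT.norm_op_right J y
end opK

section opL

theorem hb_zero {ι : Type*} (b : HilbertBasis ι ℂ E) (v : E) (h : ∀ i, ⟪b i, v⟫ = 0) : v = 0 := by
  have : b.repr v = 0 := by
    ext i
    rw [HilbertBasis.repr_apply_apply, h]; rfl
  simpa using this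

theorem card_lemma {I : Type u} (b : HilbertBasis I ℂ E) [Infinite I] (W : Set E)
    (hW : Cardinal.mk W < Cardinal.mk I) : ∃ r : E, ‖r‖ = 1 ∧ ∀ w ∈ W, ⟪w, r⟫ = 0 := by
  by_cases hf : W.Finite
  · have hfin : FiniteDimensional ℂ (Submodule.span ℂ W) := FiniteDimensional.span_of_finite ℂ hf
    have hne : (Submodule.span ℂ W)ᗮ ≠ ⊥ := by
      intro h
      rw [Submodule.orthogonal_eq_bot_iff] at h
      rw [h] at hfin
      have hE : FiniteDimensional ℂ E := Module.Finite.equiv (Submodule.topEquiv (R := ℂ) (M := E))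
      have := b.orthonormal.linearIndependent.finite_of_isNoetherian
      exact not_finite I
    obtain ⟨r, hr, hr0⟩ := Submodule.exists_mem_ne_zero_of_ne_bot hne
    refine ⟨(‖r‖⁻¹ : ℂ) • r, ?_, fun w hw => ?_⟩
    · rw [norm_smul]; simp [hr0]
    · rw [inner_smul_right, (Submodule.mem_orthogonal _ _).1 hr w (Submodule.subset_span hw),
        mul_zero]
  · have hc : ∀ w : E, (Function.support fun i => ⟪b i, w⟫).Countable := by
      intro w
      have h := (Orthonormal.inner_products_summable w b.orthonormal).countable_support
      refine h.mono fun i hi => ?_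
      simpa using hi
    have hinf : Infinite W := Set.infinite_coe_iff.2 hf
    have : Cardinal.mk (⋃ w : W, Function.support fun i => ⟪b i, (w : E)⟫) < Cardinal.mk I := by
      refine lt_of_le_of_lt ?_ hW
      refine (Cardinal.mk_iUnion_le _).trans ?_
      refine (mul_le_mul_right (ciSup_le' (a := Cardinal.aleph0) fun w => ?_) _).trans ?_
      · exact Cardinal.le_aleph0_iff_set_countable.2 (hc w)
      · simp
    have hne : (⋃ w : W, Function.support fun i => ⟪b i, (w : E)⟫) ≠ Set.univ := by
      intro h
      rw [h, Cardinal.mk_univ] at this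
      exact lt_irrefl _ this
    obtain ⟨i, hi⟩ := (Set.ne_univ_iff_exists_notMem _).1 hne
    refine ⟨b i, b.orthonormal.1 i, fun w hw => ?_⟩
    have : ⟪b i, w⟫ = 0 := by
      by_contra h
      exact hi (Set.mem_iUnion.2 ⟨⟨w, hw⟩, h⟩)
    rw [← inner_conj_symm, this, map_zero]

/-- Good sets of pairs. -/
structure GoodSet (F : Set (E →L[ℂ] E)) (A : Set (E × E)) : Prop where
  n1 : ∀ z ∈ A, ‖z.1‖ = 1
  n2 : ∀ z ∈ A, ‖z.2‖ = 1
  o1 : ∀ z ∈ A, ∀ w ∈ A, z ≠ w → ⟪z.1, w.1⟫ = 0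
  o2 : ∀ z ∈ A, ∀ w ∈ A, z ≠ w → ⟪z.2, w.2⟫ = 0
  s : ∀ z ∈ A, ∀ w ∈ A, ∀ S ∈ F, ⟪z.2, S w.1⟫ = 0

theorem goodset_max (F : Set (E →L[ℂ] E)) : ∃ A, Maximal (GoodSet F) A := by
  refine zorn_subset {A | GoodSet F A} ?_
  intro c hc hch
  have h2 : ∀ z ∈ ⋃₀ c, ∀ w ∈ ⋃₀ c, ∃ A ∈ c, z ∈ A ∧ w ∈ A := by
    rintro z ⟨A, hA, hz⟩ w ⟨B, hB, hw⟩
    rcases hch.total hA hB with h | h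
    · exact ⟨B, hB, h hz, hw⟩
    · exact ⟨A, hA, hz, h hw⟩
  refine ⟨⋃₀ c, ⟨?_, ?_, ?_, ?_, ?_⟩, fun s hs => Set.subset_sUnion_of_mem hs⟩
  · rintro z ⟨A, hA, hz⟩; exact (hc hA).n1 z hz
  · rintro z ⟨A, hA, hz⟩; exact (hc hA).n2 z hz
  · intro z hz w hw
    obtain ⟨A, hA, hz, hw⟩ := h2 z hz w hw
    exact (hc hA).o1 z hz w hw
  · intro z hz w hw
    obtain ⟨A, hA, hz, hw⟩ := h2 z hz w hw
    exact (hc hA).o2 z hz w hw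
  · intro z hz w hw
    obtain ⟨A, hA, hz, hw⟩ := h2 z hz w hw
    exact (hc hA).s z hz w hw

theorem goodset_card {I : Type u} (b : HilbertBasis I ℂ E) [Infinite I] (F : Set (E →L[ℂ] E))
    (hF : F.Finite) (A : Set (E × E)) (hA : Maximal (GoodSet F) A) :
    Cardinal.mk I ≤ Cardinal.mk A := by
  by_contra hlt
  rw [not_le] at hlt
  have hI : Cardinal.aleph0 ≤ Cardinal.mk I := Cardinal.aleph0_le_mk I
  have hFc : Cardinal.mk F < Cardinal.mk I := (Cardinal.lt_aleph0_iff_set_finite.2 hF).trans_le hI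
  have c1 : ∀ f : E × E → E, Cardinal.mk (f '' A) < Cardinal.mk I := fun f =>
    Cardinal.mk_image_le.trans_lt hlt
  have c2 : ∀ f : (E →L[ℂ] E) → E × E → E, Cardinal.mk (Set.image2 f F A) < Cardinal.mk I := by
    intro f
    rw [← Set.image_uncurry_prod]
    refine Cardinal.mk_image_le.trans_lt ?_
    rw [Cardinal.mk_setProd]
    simpa using Cardinal.mul_lt_of_lt hI hFc hlt
  have c3 : ∀ s t : Set E, Cardinal.mk s < Cardinal.mk I → Cardinal.mk t < Cardinal.mk I →
      Cardinal.mk (s ∪ t : Set E) < Cardinal.mk I := fun s t hs ht =>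
    (Cardinal.mk_union_le s t).trans_lt (Cardinal.add_lt_of_lt hI hs ht)
  obtain ⟨r, hr1, hr⟩ := card_lemma b ((fun z : E × E => z.1) '' A ∪
    Set.image2 (fun (S : E →L[ℂ] E) (z : E × E) => star S z.2) F A) (c3 _ _ (c1 _) (c2 _))
  have hrA : ∀ z ∈ A, ⟪z.1, r⟫ = 0 := fun z hz => hr _ (Or.inl ⟨z, hz, rfl⟩)
  have hrS : ∀ S ∈ F, ∀ z ∈ A, ⟪z.2, S r⟫ = 0 := fun S hS z hz => by
    have := hr _ (Or.inr ⟨S, hS, z, hz, rfl⟩)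
    change ⟪(star S) z.2, r⟫ = 0 at this
    rwa [star_eq_adjoint, ContinuousLinearMap.adjoint_inner_left] at this
  obtain ⟨r', hr1', hr'⟩ := card_lemma b (((fun z : E × E => z.2) '' A ∪
    Set.image2 (fun (S : E →L[ℂ] E) (z : E × E) => S z.1) F A) ∪ (fun S : E →L[ℂ] E => S r) '' F)
    (c3 _ _ (c3 _ _ (c1 _) (c2 _)) (Cardinal.mk_image_le.trans_lt hFc))
  have hrA' : ∀ z ∈ A, ⟪z.2, r'⟫ = 0 := fun z hz => hr' _ (Or.inl (Or.inl ⟨z, hz, rfl⟩))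
  have hrS' : ∀ S ∈ F, ∀ z ∈ A, ⟪r', S z.1⟫ = 0 := fun S hS z hz => by
    rw [← inner_conj_symm, hr' _ (Or.inl (Or.inr ⟨S, hS, z, hz, rfl⟩)), map_zero]
  have hrr : ∀ S ∈ F, ⟪r', S r⟫ = 0 := fun S hS => by
    rw [← inner_conj_symm, hr' _ (Or.inr ⟨S, hS, rfl⟩), map_zero]
  have hrA2 : ∀ z ∈ A, ⟪r, z.1⟫ = 0 := fun z hz => by
    rw [← inner_conj_symm, hrA z hz, map_zero]
  have hrA2' : ∀ z ∈ A, ⟪r', z.2⟫ = 0 := fun z hz => by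
    rw [← inner_conj_symm, hrA' z hz, map_zero]
  have hg : GoodSet F (insert (r, r') A) := by
    refine ⟨?_, ?_, ?_, ?_, ?_⟩
    · rintro z (rfl | hz)
      exacts [hr1, hA.1.n1 z hz]
    · rintro z (rfl | hz)
      exacts [hr1', hA.1.n2 z hz]
    · rintro z (rfl | hz) w (rfl | hw) h
      exacts [absurd rfl h, hrA2 w hw, hrA z hz, hA.1.o1 z hz w hw h]
    · rintro z (rfl | hz) w (rfl | hw) h
      exacts [absurd rfl h, hrA2' w hw, hrA' z hz, hA.1.o2 z hz w hw h]
    · rintro z (rfl | hz) w (rfl | hw) S hS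
      exacts [hrr S hS, hrS' S hS w hw, hrS S hS z hz, hA.1.s z hz w hw S hS]
  have hmem : (r, r') ∈ A := hA.2 hg (Set.subset_insert _ _) (Set.mem_insert _ _)
  have := hrA _ hmem
  simp only [inner_self_eq_zero] at this
  rw [this] at hr1
  simp at hr1

theorem sepProp (hE : ¬ FiniteDimensional ℂ E) : SepProp E := by
  intro F
  classical
  obtain ⟨I, b, -⟩ := exists_hilbertBasis ℂ E
  have hI := basis_infinite b hE
  obtain ⟨A, hA⟩ := goodset_max (insert 1 {x | x ∈ F})
  have hfin : (insert 1 {x | x ∈ F} : Set (E →L[ℂ] E)).Finite :=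
    Set.Finite.insert _ (Multiset.finite_toSet F)
  obtain ⟨f⟩ := goodset_card b _ hfin A hA
  have g := hA.1
  have hne : ∀ i j, i ≠ j → (f i : E × E) ≠ f j := fun i j h h' => h (f.injective (Subtype.ext h'))
  obtain ⟨v, hv, hvb⟩ := iso_exists b (fun i => (f i : E × E).1)
    ⟨fun i => g.n1 _ (f i).2, fun i j h => g.o1 _ (f i).2 _ (f j).2 (hne i j h)⟩
  obtain ⟨v', hv', hvb'⟩ := iso_exists b (fun i => (f i : E × E).2)
    ⟨fun i => g.n2 _ (f i).2, fun i j h => g.o2 _ (f i).2 _ (f j).2 (hne i j h)⟩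
  have bd : Dense (Submodule.span ℂ (Set.range b) : Set E) :=
      Submodule.dense_iff_topologicalClosure_eq_top.2 b.dense_span
  have key : ∀ x ∈ (insert 1 {x | x ∈ F} : Set (E →L[ℂ] E)), star v' * x * v = 0 := by
    intro x hx
    refine ContinuousLinearMap.ext_on bd ?_
    rintro _ ⟨i, rfl⟩
    refine hb_zero b _ fun j => ?_
    change ⟪b j, (star v') (x (v (b i)))⟫ = 0
    rw [star_eq_adjoint, ContinuousLinearMap.adjoint_inner_right, hvb, hvb']
    exact g.s _ (f j).2 _ (f i).2 x hx
  refine ⟨v, v', hv, hv', ?_, fun x hx => key x (Or.inr hx)⟩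
  simpa using key 1 (Or.inl rfl)

theorem extPkg (J : OperatorTensor E G) (hE : ¬ FiniteDimensional ℂ E) : ExtPkg (E →L[ℂ] E) := by
  obtain ⟨V₁, V₂, hV, hτ⟩ := cuntz_exists J hE
  exact ⟨fun x hx hx1 => rep_all hV hτ x hx hx1,
    fun s t hs ht hst m C hm => lemmaGR2 hV (sepProp hE) s t hs ht hst m C hm⟩
end opL

section opM
open InnerProductSpace

theorem isp_of_orthoProj {p : E →L[ℂ] E} (hp : IsOrthoProj p) : IsStarProjection p :=
  ⟨hp.1, hp.2⟩

theorem orthoProj_of_isp {p : E →L[ℂ] E} (hp : IsStarProjection p) : IsOrthoProj p :=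
  ⟨hp.1, hp.2⟩

theorem fin_proj_eq {p : E →L[ℂ] E} (hp : IsOrthoProj p) (hf : HasFiniteRank p) :
    ∃ (n : ℕ) (a : Fin n → E), p = ∑ i, rankOne ℂ (a i) (a i) := by
  obtain ⟨hU, hpU⟩ := isStarProjection_iff_eq_starProjection_range.1 (isp_of_orthoProj hp)
  have hf' : FiniteDimensional ℂ p.range := hf
  exact ⟨_, _, hpU.trans (stdOrthonormalBasis ℂ p.range).starProjection_eq_sum_rankOne⟩

theorem rankOne_compact (a b : E) : IsCompactOperator (rankOne ℂ a b) := by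
  have h : IsCompactOperator (innerSL ℂ b : E → ℂ) := by
    refine ⟨Metric.closedBall 0 1, isCompact_closedBall _ _, ?_⟩
    exact (innerSL ℂ b).continuous.continuousAt.preimage_mem_nhds
      (by rw [map_zero]; exact Metric.closedBall_mem_nhds _ one_pos)
  have := h.clm_comp (ContinuousLinearMap.toSpanSingleton ℂ a)
  rw [rankOne_def']
  exact this

theorem fin_proj_compact {p : E →L[ℂ] E} (hp : IsOrthoProj p) (hf : HasFiniteRank p) :
    IsCompactOperator p := by
  obtain ⟨n, a, rfl⟩ := fin_proj_eq hp hf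
  have : (∑ i, rankOne ℂ (a i) (a i)) ∈ compactOperator (RingHom.id ℂ) E E :=
    Submodule.sum_mem _ fun i _ => rankOne_compact _ _
  exact this

theorem OT.op_rankOne (J : OperatorTensor E G) (a b c e : E) :
    J.op (rankOne ℂ a b) (rankOne ℂ c e) = rankOne ℂ (J.tmul a c) (J.tmul b e) := by
  refine OT.ext J fun x y => ?_
  rw [J.op_tmul]
  simp [J.inner_tmul, smul_smul, mul_comm]

theorem hasSum_rankOne {ι : Type*} (b : HilbertBasis ι ℂ G) (t : G) (X : G →L[ℂ] G) :
    HasSum (fun k => ⟪b k, (rankOne ℂ t t * X) (b k)⟫) ⟪t, X t⟫ := by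
  have := b.hasSum_inner_mul_inner (ContinuousLinearMap.adjoint X t) t
  rw [ContinuousLinearMap.adjoint_inner_left] at this
  refine this.congr_fun ?_ 
  intro k
  simp [inner_smul_right, ContinuousLinearMap.adjoint_inner_left]

theorem norm_sum_rankOne {n : ℕ} (e f : Fin n → G) (he : Orthonormal ℂ e) (hf : Orthonormal ℂ f)
    (c : Fin n → ℂ) (hc : ∀ i, ‖c i‖ ≤ 1) : ‖∑ i, c i • rankOne ℂ (f i) (e i)‖ ≤ 1 := by
  refine ContinuousLinearMap.opNorm_le_bound _ zero_le_one fun z => ?_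
  rw [one_mul]
  refine le_of_sq_le_sq ?_ (norm_nonneg _)
  have h1 : (∑ i, c i • rankOne ℂ (f i) (e i)) z = ∑ i, (c i * ⟪e i, z⟫) • f i := by
    simp [ContinuousLinearMap.sum_apply, smul_smul]
  have h2 : ‖∑ i, (c i * ⟪e i, z⟫) • f i‖ ^ 2 = ∑ i, ‖c i * ⟪e i, z⟫‖ ^ 2 := by
    have := hf.inner_sum (fun i => c i * ⟪e i, z⟫) (fun i => c i * ⟪e i, z⟫) Finset.univ
    rw [inner_self_eq_norm_sq_to_K] at this
    have h3 : ∀ w : ℂ, starRingEnd ℂ w * w = ((‖w‖ ^ 2 : ℝ) : ℂ) := fun w => by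
      rw [mul_comm, Complex.mul_conj, Complex.normSq_eq_norm_sq]
    simp only [h3] at this
    refine Complex.ofReal_injective ?_
    push_cast
    push_cast at this
    exact this
  rw [h1, h2]
  calc ∑ i, ‖c i * ⟪e i, z⟫‖ ^ 2 ≤ ∑ i, ‖⟪e i, z⟫‖ ^ 2 := by
        refine Finset.sum_le_sum fun i _ => ?_
        rw [norm_mul]
        gcongr
        exact mul_le_of_le_one_left (norm_nonneg _) (hc i)
    _ ≤ ‖z‖ ^ 2 := he.sum_inner_products_le z

theorem exists_density (g : (G →L[ℂ] G) →L[ℂ] ℂ) :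
    ∃ X : G →L[ℂ] G, IsTraceClass X ∧ ∀ ξ η, ⟪η, X ξ⟫ = g (rankOne ℂ ξ η) := by
  let B : G →L⋆[ℂ] G →L[ℂ] ℂ := LinearMap.mkContinuous₂
    (LinearMap.mk₂'ₛₗ (starRingEnd ℂ) (RingHom.id ℂ) (fun η ξ => g (rankOne ℂ ξ η))
      (by intros; simp) (by intros; simp) (by intros; simp) (by intros; simp)) ‖g‖ (by
      intro η ξ
      refine (g.le_opNorm _).trans ?_
      rw [norm_rankOne, mul_assoc, mul_comm ‖ξ‖])
  have hX : ∀ ξ η, ⟪η, (ContinuousLinearMap.adjoint (continuousLinearMapOfBilin B)) ξ⟫ =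
      g (rankOne ℂ ξ η) := by
    intro ξ η
    rw [ContinuousLinearMap.adjoint_inner_right, continuousLinearMapOfBilin_apply]
    rfl
  refine ⟨_, ⟨‖g‖, fun n e f he hf => ?_⟩, hX⟩
  simp only [hX]
  have hc : ∀ w : ℂ, ∃ c : ℂ, ‖c‖ ≤ 1 ∧ ((‖w‖ : ℝ) : ℂ) = c * w := by
    intro w
    by_cases hw : w = 0
    · exact ⟨0, by simp, by simp [hw]⟩
    · refine ⟨(‖w‖ : ℂ) / w, ?_, ?_⟩
      · rw [norm_div]; simp [hw]
      · field_simp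
  choose c hc1 hc2 using hc
  have h1 : ((∑ i, ‖g (rankOne ℂ (f i) (e i))‖ : ℝ) : ℂ) =
      g (∑ i, c (g (rankOne ℂ (f i) (e i))) • rankOne ℂ (f i) (e i)) := by
    rw [map_sum, Complex.ofReal_sum]
    refine Finset.sum_congr rfl fun i _ => ?_
    rw [map_smul, smul_eq_mul]
    exact hc2 _
  have h2 : ∑ i, ‖g (rankOne ℂ (f i) (e i))‖ = 
      ‖g (∑ i, c (g (rankOne ℂ (f i) (e i))) • rankOne ℂ (f i) (e i))‖ := by
    rw [← h1, Complex.norm_real, Real.norm_of_nonneg (Finset.sum_nonneg fun i _ => norm_nonneg _)]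
  rw [h2]
  refine (g.le_opNorm _).trans ?_
  exact mul_le_of_le_one_right (norm_nonneg _) (norm_sum_rankOne e f he hf _ fun i => hc1 _)

theorem forward_dir (d : (E →L[ℂ] E) → (E →L[ℂ] E) → ℂ)
    (J : OperatorTensor E G) {ι : Type u} (bG : HilbertBasis ι ℂ G) (h : IsTensorBounded J d) :
      ∃ X : G →L[ℂ] G, IsTraceClass X ∧
        ∀ p q : E →L[ℂ] E, IsOrthoProj p → IsOrthoProj q →
          HasFiniteRank p → HasFiniteRank q →
          d p q = traceAlong bG (J.op p q * X) := by
  obtain ⟨D, -, hD, β, hβ, C, hC⟩ := h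
  obtain ⟨g, hg, -⟩ := exists_extension_norm_eq J.compactSpan (β.mkContinuous C hC)
  obtain ⟨X, hX, hXg⟩ := exists_density g
  refine ⟨X, hX, fun p q hp hq fp fq => ?_⟩
  have hm : J.op p q ∈ J.compactSpan := Submodule.subset_span
    ⟨p, q, fin_proj_compact hp fp, fin_proj_compact hq fq, rfl⟩
  have h1 : g (J.op p q) = d p q := by
    rw [← hD p q hp hq, ← hβ p q (fin_proj_compact hp fp) (fin_proj_compact hq fq) hm]
    exact hg ⟨_, hm⟩
  obtain ⟨n, a, ha⟩ := fin_proj_eq hp fp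
  obtain ⟨k, b, hb⟩ := fin_proj_eq hq fq
  have h2 : J.op p q = ∑ i, ∑ j, rankOne ℂ (J.tmul (a i) (b j)) (J.tmul (a i) (b j)) := by
    rw [← OT.opB_apply, ha, hb]
    simp only [map_sum, LinearMap.sum_apply, OT.opB_apply, OT.op_rankOne]
    rw [Finset.sum_comm]
  have h3 : HasSum (fun k => ⟪bG k, (J.op p q * X) (bG k)⟫) (g (J.op p q)) := by
    have := hasSum_sum (s := Finset.univ) fun i _ => hasSum_sum (s := Finset.univ) fun j _ =>
      hasSum_rankOne bG (J.tmul (a i) (b j)) X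
    rw [h2]
    simp only [map_sum, ← hXg]
    refine this.congr_fun ?_
    intro k
    simp only [Finset.sum_mul, ContinuousLinearMap.sum_apply, inner_sum]
  rw [← h1]
  exact h3.tsum_eq.symm
end opM

section opN
open InnerProductSpace

theorem tc_nonneg {X : G →L[ℂ] G} {C : ℝ} (hC : ∀ (n : ℕ) (e f : Fin n → G), Orthonormal ℂ e →
    Orthonormal ℂ f → ∑ i, ‖⟪e i, X (f i)⟫‖ ≤ C) : 0 ≤ C := by
  simpa using hC 0 Fin.elim0 Fin.elim0 ⟨fun i => i.elim0, fun i => i.elim0⟩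
    ⟨fun i => i.elim0, fun i => i.elim0⟩

theorem tc_unitary {X : G →L[ℂ] G} {C : ℝ} (hC : ∀ (n : ℕ) (e f : Fin n → G), Orthonormal ℂ e →
    Orthonormal ℂ f → ∑ i, ‖⟪e i, X (f i)⟫‖ ≤ C) {ι : Type*} (b : HilbertBasis ι ℂ G)
    (u : unitary (G →L[ℂ] G)) (s : Finset ι) :
    ∑ i ∈ s, ‖⟪b i, (u : G →L[ℂ] G) (X (b i))⟫‖ ≤ C := by
  have hu : ∀ x y, ⟪star (u : G →L[ℂ] G) x, star (u : G →L[ℂ] G) y⟫ = ⟪x, y⟫ := by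
    intro x y
    rw [star_eq_adjoint, ContinuousLinearMap.adjoint_inner_left, ← star_eq_adjoint]
    have : (u : G →L[ℂ] G) * star (u : G →L[ℂ] G) = 1 := Unitary.coe_mul_star_self u
    have h2 : (u : G →L[ℂ] G) (star (u : G →L[ℂ] G) y) = y := DFunLike.congr_fun this y
    rw [h2]
  have hb : Orthonormal ℂ (fun k : Fin s.card => b (s.equivFin.symm k)) :=
    b.orthonormal.comp (fun k : Fin s.card => (s.equivFin.symm k : ι))
      (Subtype.val_injective.comp s.equivFin.symm.injective)
  have hb' : Orthonormal ℂ (fun k : Fin s.card =>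
      star (u : G →L[ℂ] G) (b (s.equivFin.symm k))) := by
    rw [orthonormal_iff_ite] at hb ⊢
    intro i j
    rw [hu, hb]
  have := hC _ _ _ hb' hb
  simp only [star_eq_adjoint, ContinuousLinearMap.adjoint_inner_left] at this
  refine le_of_eq_of_le ?_ this
  rw [← Finset.sum_coe_sort s]
  exact (Equiv.sum_comp s.equivFin.symm
    (fun i : s => ‖⟪b i, (u : G →L[ℂ] G) (X (b i))⟫‖)).symm

theorem tc_bound {X : G →L[ℂ] G} {C : ℝ} (hC : ∀ (n : ℕ) (e f : Fin n → G), Orthonormal ℂ e →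
    Orthonormal ℂ f → ∑ i, ‖⟪e i, X (f i)⟫‖ ≤ C) {ι : Type*} (b : HilbertBasis ι ℂ G)
    (T : G →L[ℂ] G) (s : Finset ι) : ∑ i ∈ s, ‖⟪b i, T (X (b i))⟫‖ ≤ 2 * C * ‖T‖ := by
  obtain ⟨u, c, hT, hc⟩ := CStarAlgebra.exists_sum_four_unitary T
  have h1 : ∀ i, ‖⟪b i, T (X (b i))⟫‖ ≤
      ∑ k, ‖c k‖ * ‖⟪b i, (u k : G →L[ℂ] G) (X (b i))⟫‖ := by
    intro i
    have e : ⟪b i, T (X (b i))⟫ = ∑ k, c k * ⟪b i, (u k : G →L[ℂ] G) (X (b i))⟫ := by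
      conv_lhs => rw [hT]
      simp only [ContinuousLinearMap.sum_apply, inner_sum, ContinuousLinearMap.smul_apply,
        inner_smul_right]
    rw [e]
    refine (norm_sum_le _ _).trans (le_of_eq ?_)
    simp only [norm_mul]
  calc ∑ i ∈ s, ‖⟪b i, T (X (b i))⟫‖
      ≤ ∑ i ∈ s, ∑ k, ‖c k‖ * ‖⟪b i, (u k : G →L[ℂ] G) (X (b i))⟫‖ :=
        Finset.sum_le_sum fun i _ => h1 i
    _ = ∑ k, ‖c k‖ * ∑ i ∈ s, ‖⟪b i, (u k : G →L[ℂ] G) (X (b i))⟫‖ := by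
        rw [Finset.sum_comm]
        simp only [Finset.mul_sum]
    _ ≤ ∑ k : Fin 4, ‖T‖ / 2 * C := by
        refine Finset.sum_le_sum fun k _ => ?_
        exact mul_le_mul (hc k) (tc_unitary hC b (u k) s)
          (Finset.sum_nonneg fun i _ => norm_nonneg _) (by positivity)
    _ = 2 * C * ‖T‖ := by simp; ring

theorem exists_trace_functional {X : G →L[ℂ] G} (hX : IsTraceClass X) {ι : Type*}
    (b : HilbertBasis ι ℂ G) : ∃ (f : (G →L[ℂ] G) →ₗ[ℂ] ℂ) (C : ℝ), 0 ≤ C ∧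
      (∀ T, f T = traceAlong b (T * X)) ∧ ∀ T, ‖f T‖ ≤ C * ‖T‖ := by
  obtain ⟨C, hC⟩ := hX
  have hs : ∀ T : G →L[ℂ] G, Summable fun i => ‖⟪b i, T (X (b i))⟫‖ := fun T =>
    summable_of_sum_le (fun i => norm_nonneg _) (tc_bound hC b T)
  have hs' : ∀ T : G →L[ℂ] G, Summable fun i => ⟪b i, T (X (b i))⟫ := fun T => (hs T).of_norm
  refine ⟨⟨⟨fun T => ∑' i, ⟪b i, T (X (b i))⟫, fun S T => ?_⟩, fun c T => ?_⟩, 2 * C,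
    by linarith [tc_nonneg hC], fun T => rfl, fun T => ?_⟩
  · rw [← (hs' S).tsum_add (hs' T)]
    simp [inner_add_right]
  · simp [inner_smul_right, tsum_mul_left]
  · refine (norm_tsum_le_tsum_norm (hs T)).trans ?_
    exact (hs T).tsum_le_of_sum_le (tc_bound hC b T)

theorem compact_approx {x : E →L[ℂ] E} (hx : IsCompactOperator x) {ε : ℝ} (hε : 0 < ε) :
    ∃ (n : ℕ) (a : Fin n → E), ‖x - ∑ i, rankOne ℂ (a i) (star x (a i))‖ ≤ ε := by
  have hc : IsCompact (closure (x '' Metric.closedBall 0 1)) :=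
    IsCompactOperator.isCompact_closure_image_closedBall (f := (x : E →ₗ[ℂ] E)) hx 1
  have htb := hc.totallyBounded.subset subset_closure
  obtain ⟨t, htf, ht⟩ := Metric.totallyBounded_iff.1 htb ε hε
  let U := Submodule.span ℂ t
  have hU : FiniteDimensional ℂ U := FiniteDimensional.span_of_finite ℂ htf
  have hP := (stdOrthonormalBasis ℂ U).starProjection_eq_sum_rankOne
  refine ⟨_, fun i => (stdOrthonormalBasis ℂ U i : E), ?_⟩
  have h1 : ∑ i, rankOne ℂ (stdOrthonormalBasis ℂ U i : E) (star x (stdOrthonormalBasis ℂ U i : E))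
      = U.starProjection * x := by
    rw [hP, Finset.sum_mul]
    refine Finset.sum_congr rfl fun i _ => ?_
    ext z
    simp [star_eq_adjoint, ContinuousLinearMap.adjoint_inner_left]
  rw [h1]
  refine ContinuousLinearMap.opNorm_le_of_unit_norm hε.le fun z hz => ?_
  have hz' : x z ∈ ⋃ y ∈ t, Metric.ball y ε := ht ⟨z, by simp [hz], rfl⟩
  simp only [Set.mem_iUnion] at hz'
  obtain ⟨y, hy, hyz⟩ := hz'
  have hyU : U.starProjection y = y :=
    Submodule.starProjection_eq_self_iff.2 (Submodule.subset_span hy)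
  have h2 : (x - U.starProjection * x) z = (1 - U.starProjection) (x z - y) := by
    simp [hyU]
  rw [h2]
  have h3 : ‖(1 - U.starProjection : E →L[ℂ] E)‖ ≤ 1 := by
    have : (1 - U.starProjection : E →L[ℂ] E) = Uᗮ.starProjection := by
      rw [Submodule.starProjection_orthogonal]; rfl
    rw [this]
    exact Submodule.starProjection_norm_le _
  refine (ContinuousLinearMap.le_of_opNorm_le _ h3 _).trans ?_
  rw [one_mul, ← dist_eq_norm]
  exact (Metric.mem_ball.1 hyz).le

theorem rankOne_finiteRank (a b : E) : HasFiniteRank (rankOne ℂ a b) := by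
  refine Submodule.finiteDimensional_of_le (S₂ := Submodule.span ℂ {a}) ?_
  rintro _ ⟨z, rfl⟩
  exact Submodule.mem_span_singleton.2 ⟨⟪b, z⟫, rfl⟩

theorem compact_zero (f : (E →L[ℂ] E) →ₗ[ℂ] ℂ) (C : ℝ) (hC : ∀ x, ‖f x‖ ≤ C * ‖x‖)
    (hf : ∀ p, IsOrthoProj p → HasFiniteRank p → f p = 0) (x : E →L[ℂ] E)
    (hx : IsCompactOperator x) : f x = 0 := by
  have h1 : ∀ v : E, f (rankOne ℂ v v) = 0 := by
    intro v
    by_cases hv : v = 0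
    · simp [hv]
    have hw : ‖(‖v‖⁻¹ : ℂ) • v‖ = 1 := by rw [norm_smul]; simp [hv]
    have hp := isStarProjection_rankOne_self (𝕜 := ℂ) hw
    have := hf _ ⟨hp.1, hp.2⟩ (rankOne_finiteRank _ _)
    simpa [hv] using this
  have h2 : ∀ v w : E, f (rankOne ℂ v w) + f (rankOne ℂ w v) = 0 := by
    intro v w
    have := h1 (v + w)
    simpa [h1] using this
  have h3 : ∀ v w : E, f (rankOne ℂ v w) = 0 := by
    intro v w
    have e1 := h2 v w
    have e2 := h2 (Complex.I • v) w
    simp only [map_smul, map_smulₛₗ, ContinuousLinearMap.smul_apply, Complex.conj_I,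
      smul_eq_mul] at e2
    have e3 : f (rankOne ℂ v w) - f (rankOne ℂ w v) = 0 := by
      have : Complex.I * (f (rankOne ℂ v w) - f (rankOne ℂ w v)) = 0 := by linear_combination e2
      exact (mul_eq_zero.1 this).resolve_left Complex.I_ne_zero
    linear_combination (e1 + e3) / 2
  have hC0 : ∀ x, ‖f x‖ ≤ |C| * ‖x‖ := fun x => (hC x).trans
    (mul_le_mul_of_nonneg_right (le_abs_self _) (norm_nonneg _))
  rw [← norm_le_zero_iff]
  refine le_of_forall_pos_le_add fun δ hδ => ?_
  obtain ⟨n, a, ha⟩ := compact_approx hx (ε := δ / (|C| + 1)) (by positivity)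
  have h4 : f x = f (x - ∑ i, rankOne ℂ (a i) (star x (a i))) := by
    rw [map_sub, map_sum]; simp [h3]
  rw [h4, zero_add]
  refine (hC0 _).trans ?_
  calc |C| * ‖x - ∑ i, rankOne ℂ (a i) (star x (a i))‖ ≤ |C| * (δ / (|C| + 1)) := by gcongr
    _ ≤ (|C| + 1) * (δ / (|C| + 1)) := by gcongr; linarith
    _ = δ := by field_simp

theorem compact_zero₂ (Ψ : (E →L[ℂ] E) →ₗ[ℂ] (E →L[ℂ] E) →ₗ[ℂ] ℂ) (hb : IsBoundedBilinear Ψ)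
    (h : ∀ p q, IsOrthoProj p → IsOrthoProj q → HasFiniteRank p → HasFiniteRank q → Ψ p q = 0)
    (x y : E →L[ℂ] E) (hx : IsCompactOperator x) (hy : IsCompactOperator y) : Ψ x y = 0 := by
  obtain ⟨C, hC⟩ := hb
  refine compact_zero (Ψ x) (C * ‖x‖) (fun y => hC x y) (fun q hq fq => ?_) y hy
  refine compact_zero (Ψ.flip q) (C * ‖q‖) (fun z => ?_) (fun p hp fp => h p q hp hq fp fq) x hx
  exact (hC z q).trans (le_of_eq (by ring))

theorem exists_D (J : OperatorTensor E G) (d : (E →L[ℂ] E) → (E →L[ℂ] E) → ℂ)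
    (hd : IsDecoherenceFunctional d) (hbd : DFBounded d)
    (φ : (E →L[ℂ] E) →ₗ[ℂ] (E →L[ℂ] E) →ₗ[ℂ] ℂ) (hφ : IsBoundedBilinear φ)
    (hφd : ∀ p q, IsOrthoProj p → IsOrthoProj q → HasFiniteRank p → HasFiniteRank q →
      d p q = φ p q) : ∃ D, IsBoundedBilinear D ∧ ExtendsDF D d := by
  by_cases hE : FiniteDimensional ℂ E
  · refine ⟨φ, hφ, fun p q hp hq => (hφd p q hp hq ?_ ?_).symm⟩
    · exact inferInstanceAs (FiniteDimensional ℂ (LinearMap.range (p : E →ₗ[ℂ] E)))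
    · exact inferInstanceAs (FiniteDimensional ℂ (LinearMap.range (q : E →ₗ[ℂ] E)))
  · obtain ⟨C, hC⟩ := hbd
    have hP := extPkg J hE
    have ho : ∀ p : E →L[ℂ] E, IsStarProjection p → IsOrthoProj p := fun p hp => ⟨hp.1, hp.2⟩
    have hadd : ∀ p q : E →L[ℂ] E, IsOrthoProj p → IsOrthoProj q → p * q = 0 →
        IsOrthoProj (p + q) := by
      intro p q hp hq h
      have h' : q * p = 0 := by
        have := congrArg star h
        rwa [star_mul, hp.2.star_eq, hq.2.star_eq, star_zero] at this
      refine ⟨?_, hp.2.add hq.2⟩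
      change (p + q) * (p + q) = p + q
      rw [mul_add, add_mul, add_mul, h, h', hp.1.eq, hq.1.eq, add_zero, zero_add]
    obtain ⟨D, hD, hDb⟩ := hP.bilinear d C
      (fun q hq => ⟨fun p p' hp hp' h => hd.orthoadd p p' q (ho _ hp) (ho _ hp') (ho _ hq) h,
        fun p hp => hC p q (ho _ hp) (ho _ hq)⟩)
      (fun p hp => ⟨fun q q' hq hq' h => by
        rw [hd.hermitian p (q + q') (ho _ hp) (hadd _ _ (ho _ hq) (ho _ hq') h),
          hd.hermitian p q (ho _ hp) (ho _ hq), hd.hermitian p q' (ho _ hp) (ho _ hq'),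
          hd.orthoadd q q' p (ho _ hq) (ho _ hq') (ho _ hp) h, map_add],
        fun q hq => hC p q (ho _ hp) (ho _ hq)⟩)
    exact ⟨D, ⟨_, hDb⟩, fun p q hp hq => hD p q ⟨hp.1, hp.2⟩ ⟨hq.1, hq.2⟩⟩

theorem backward_dir (d : (E →L[ℂ] E) → (E →L[ℂ] E) → ℂ)
    (hd : IsDecoherenceFunctional d) (hbd : DFBounded d)
    (J : OperatorTensor E G) {ι : Type u} (bG : HilbertBasis ι ℂ G)
    (h : ∃ X : G →L[ℂ] G, IsTraceClass X ∧
        ∀ p q : E →L[ℂ] E, IsOrthoProj p → IsOrthoProj q →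
          HasFiniteRank p → HasFiniteRank q →
          d p q = traceAlong bG (J.op p q * X)) : IsTensorBounded J d := by
  obtain ⟨X, hX, hXd⟩ := h
  obtain ⟨f, C, hC0, hf, hC⟩ := exists_trace_functional hX bG
  let φ : (E →L[ℂ] E) →ₗ[ℂ] (E →L[ℂ] E) →ₗ[ℂ] ℂ := (OT.opB J).compr₂ f
  have hφ : ∀ x y, φ x y = f (J.op x y) := fun x y => rfl
  have hφb : ∀ x y, ‖φ x y‖ ≤ C * ‖x‖ * ‖y‖ := by
    intro x y
    rw [hφ, mul_assoc]
    exact (hC _).trans (mul_le_mul_of_nonneg_left (OT.norm_op J x y) hC0)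
  have hφd : ∀ p q, IsOrthoProj p → IsOrthoProj q → HasFiniteRank p → HasFiniteRank q →
      d p q = φ p q := fun p q hp hq fp fq => by
    rw [hφ, hf]; exact hXd p q hp hq fp fq
  obtain ⟨D, ⟨C', hDb⟩, hDd⟩ := exists_D J d hd hbd φ ⟨C, hφb⟩ hφd
  have key := compact_zero₂ (D - φ) ⟨C' + C, fun x y => by
      simp only [LinearMap.sub_apply]
      refine (norm_sub_le _ _).trans ?_
      have := hDb x y
      have := hφb x y
      linarith⟩ (fun p q hp hq fp fq => by
      simp only [LinearMap.sub_apply]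
      rw [hDd p q hp hq, hφd p q hp hq fp fq, sub_self])
  refine ⟨D, ⟨C', hDb⟩, hDd, f.comp J.compactSpan.subtype, fun x y hx hy hm => ?_,
    C, fun S => hC _⟩
  have := key x y hx hy
  simp only [LinearMap.sub_apply, sub_eq_zero] at this
  rw [this]
  rfl
end opN

/-- A bounded decoherence functional `d` on a Hilbert space of
dimension `≠ 2` is tensor bounded iff there is a trace class operator `𝔛` on
`𝔥 ⊗ 𝔥` with `d(p,q) = tr((p ⊗ q) 𝔛)` for all finite rank projections `p, q`. -/
theorem stmt_2 (hdim : Module.rank ℂ E ≠ 2)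
    (d : (E →L[ℂ] E) → (E →L[ℂ] E) → ℂ)
    (hd : IsDecoherenceFunctional d) (hbd : DFBounded d)
    (J : OperatorTensor E G) {ι : Type u} (bG : HilbertBasis ι ℂ G) :
    IsTensorBounded J d ↔
      ∃ X : G →L[ℂ] G, IsTraceClass X ∧
        ∀ p q : E →L[ℂ] E, IsOrthoProj p → IsOrthoProj q →
          HasFiniteRank p → HasFiniteRank q →
          d p q = traceAlong bG (J.op p q * X) := by
  exact ⟨forward_dir d J bG, backward_dir d hd hbd J bG⟩
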